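/- Let X be a rearrangement invariant space on [0,1] which has the weak Banach-Saks property and is such that both X and X* have the subsequence splitting property. Let K : [0,1]×[0,1] → [0,∞] be a measurable kernel such that T_K(χ_{[0,1]}) ∈ X. Then the Banach function space [T_K,X] := {f ∈ L⁰[0,1] : T_K(|f|) ∈ X}, with norm ‖f‖_{[T_K,X]} := ‖T_K(|f|)‖_X, has both the subsequence splitting property and the weak Banach-Saks property. -/

import Mathlib

open MeasureTheory Filter Topology
open scoped ENNReal

noncomputable section

namespace Paper

variable {Ω : Type*} [MeasurableSpace Ω]
variable {X : Type*} [NormedAddCommGroup X] [NormedSpace ℝ X]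

/-- The signed measure `x* ∘ m` for a functional `x*` and vector measure `m`. -/
def dualApply (m : VectorMeasure Ω X) (x : X →L[ℝ] ℝ) : SignedMeasure Ω :=
  m.mapRange x.toLinearMap.toAddMonoidHom x.continuous

/-- The semivariation `‖m‖(A)` of a vector measure. -/
def semivar (m : VectorMeasure Ω X) (A : Set Ω) : ℝ≥0∞ :=
  ⨆ x : {x : X →L[ℝ] ℝ // ‖x‖ ≤ 1}, (dualApply m x.1).totalVariation A

/-- `P` holds `‖m‖`-almost everywhere. -/
def MAE (m : VectorMeasure Ω X) (P : Ω → Prop) : Prop :=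
  ∃ N : Set Ω, MeasurableSet N ∧ semivar m N = 0 ∧ ∀ ω ∉ N, P ω

/-- The integral `∫_A f ds` of a real function with respect to a signed measure. -/
def sIntegral (s : SignedMeasure Ω) (f : Ω → ℝ) (A : Set Ω) : ℝ :=
  (∫ ω in A, f ω ∂s.toJordanDecomposition.posPart) -
    ∫ ω in A, f ω ∂s.toJordanDecomposition.negPart

/-- `f` is integrable with respect to the vector measure `m` (Bartle-Dunford-Schwartz). -/
def MIntegrable (m : VectorMeasure Ω X) (f : Ω → ℝ) : Prop :=
  Measurable f ∧
  (∀ x : X →L[ℝ] ℝ, Integrable f ((dualApply m x).totalVariation)) ∧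
  (∀ A : Set Ω, MeasurableSet A →
    ∃ v : X, ∀ x : X →L[ℝ] ℝ, x v = sIntegral (dualApply m x) f A)

open Classical in
/-- The vector integral `∫_A f dm ∈ X`. -/
def mIntegral (m : VectorMeasure Ω X) (f : Ω → ℝ) (A : Set Ω) : X :=
  if h : ∃ v : X, ∀ x : X →L[ℝ] ℝ, x v = sIntegral (dualApply m x) f A then h.choose
  else 0

/-- The norm of `L¹(m)`: `‖f‖ = sup_{‖x*‖ ≤ 1} ∫ |f| d|x*m|`. -/
def mNorm (m : VectorMeasure Ω X) (f : Ω → ℝ) : ℝ :=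
  ⨆ x : {x : X →L[ℝ] ℝ // ‖x‖ ≤ 1}, ∫ ω, |f ω| ∂(dualApply m x.1).totalVariation

/-- The vector measure `m` is separable: the pseudometric space `(Σ, d_m)`,
`d_m(A,B) = ‖m‖(A △ B)`, is separable. -/
def SeparableVM (m : VectorMeasure Ω X) : Prop :=
  ∃ D : Set (Set Ω), D.Countable ∧ (∀ B ∈ D, MeasurableSet B) ∧
    ∀ A : Set Ω, MeasurableSet A → ∀ ε : ℝ, 0 < ε →
      ∃ B ∈ D, semivar m (symmDiff A B) < ENNReal.ofReal ε

section FunctionSpace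

variable {S : Type*} [MeasurableSpace S]

/-- `T` is a bounded linear functional on the function space determined by the
membership predicate `mem` and the norm `nrm`. -/
def IsBddLinFunctional (mem : (S → ℝ) → Prop) (nrm : (S → ℝ) → ℝ)
    (T : (S → ℝ) → ℝ) : Prop :=
  (∀ f g, mem f → mem g → T (f + g) = T f + T g) ∧
  (∀ (c : ℝ) (f), mem f → T (c • f) = c * T f) ∧
  (∃ C : ℝ, ∀ f, mem f → |T f| ≤ C * nrm f)

/-- `f` is a weakly null sequence in the function space `(mem, nrm)`. -/
def WeaklyNullSeq (mem : (S → ℝ) → Prop) (nrm : (S → ℝ) → ℝ) (f : ℕ → S → ℝ) : Prop :=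
  ∀ T : (S → ℝ) → ℝ, IsBddLinFunctional mem nrm T →
    Tendsto (fun n => T (f n)) atTop (nhds 0)

/-- The set `K` has uniformly absolutely continuous norm in the function space with
norm `nrm` over the measure `μ`. -/
def UnifACNorm (μ : Measure S) (nrm : (S → ℝ) → ℝ) (K : Set (S → ℝ)) : Prop :=
  ∀ ε : ℝ, 0 < ε → ∃ δ : ℝ, 0 < δ ∧ ∀ A : Set S, MeasurableSet A →
    μ A < ENNReal.ofReal δ → ∀ f ∈ K, nrm (A.indicator f) ≤ ε

/-- The subsequence splitting property for the function space `(mem, nrm)` over `μ`. -/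
def HasSSP (μ : Measure S) (mem : (S → ℝ) → Prop) (nrm : (S → ℝ) → ℝ) : Prop :=
  ∀ f : ℕ → S → ℝ, (∀ n, mem (f n)) → (∃ C : ℝ, ∀ n, nrm (f n) ≤ C) →
    ∃ σ : ℕ → ℕ, StrictMono σ ∧
      ∃ g h : ℕ → S → ℝ,
        (∀ n, mem (g n)) ∧ (∀ n, mem (h n)) ∧
        (∀ n, f (σ n) = g n + h n) ∧
        (∀ n, (fun s => g n s * h n s) =ᵐ[μ] 0) ∧
        UnifACNorm μ nrm (Set.range g) ∧
        (∀ i j, i ≠ j → (fun s => h i s * h j s) =ᵐ[μ] 0)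

/-- The weak Banach-Saks property for the function space `(mem, nrm)`. -/
def HasWBS (mem : (S → ℝ) → Prop) (nrm : (S → ℝ) → ℝ) : Prop :=
  ∀ f : ℕ → S → ℝ, (∀ n, mem (f n)) → WeaklyNullSeq mem nrm f →
    ∃ σ : ℕ → ℕ, StrictMono σ ∧
      Tendsto (fun n : ℕ => nrm ((n : ℝ)⁻¹ • ∑ k ∈ Finset.range n, f (σ k))) atTop (nhds 0)

end FunctionSpace

/-- A Banach function space over `(S, μ)`: an (abstract) normed space `X` together with
a linear embedding `J` into measurable functions on `S`, separating points modulo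
`μ`-null sets and satisfying the ideal property. -/
structure BFS (S : Type*) [MeasurableSpace S] (μ : Measure S)
    (X : Type*) [NormedAddCommGroup X] [NormedSpace ℝ X] where
  J : X →ₗ[ℝ] (S → ℝ)
  aemeasurable : ∀ x : X, AEMeasurable (J x) μ
  eq_zero : ∀ x : X, J x =ᵐ[μ] 0 → x = 0
  ideal : ∀ (x : X) (g : S → ℝ), AEMeasurable g μ →
    (∀ᵐ s ∂μ, |g s| ≤ |J x s|) → ∃ y : X, J y =ᵐ[μ] g ∧ ‖y‖ ≤ ‖x‖

variable {S : Type*} [MeasurableSpace S] {μ : Measure S}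

/-- The set `K ⊆ X` has uniformly absolutely continuous norm in the B.f.s. `X`. -/
def BFS.UnifAC (B : BFS S μ X) (K : Set X) : Prop :=
  ∀ ε : ℝ, 0 < ε → ∃ δ : ℝ, 0 < δ ∧ ∀ A : Set S, MeasurableSet A →
    μ A < ENNReal.ofReal δ → ∀ x ∈ K, ∀ y : X, B.J y =ᵐ[μ] A.indicator (B.J x) → ‖y‖ ≤ ε

/-- The B.f.s. `X` has absolutely continuous norm. -/
def BFS.ACNorm (B : BFS S μ X) : Prop :=
  ∀ x : X, ∀ ε : ℝ, 0 < ε → ∃ δ : ℝ, 0 < δ ∧ ∀ A : Set S, MeasurableSet A →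
    μ A < ENNReal.ofReal δ → ∀ y : X, B.J y =ᵐ[μ] A.indicator (B.J x) → ‖y‖ ≤ ε

/-- The subsequence splitting property for the B.f.s. `X`. -/
def BFS.SSP (B : BFS S μ X) : Prop :=
  ∀ f : ℕ → X, (∃ C : ℝ, ∀ n, ‖f n‖ ≤ C) →
    ∃ σ : ℕ → ℕ, StrictMono σ ∧
      ∃ g h : ℕ → X,
        (∀ n, f (σ n) = g n + h n) ∧
        (∀ n, (fun s => B.J (g n) s * B.J (h n) s) =ᵐ[μ] 0) ∧
        B.UnifAC (Set.range g) ∧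
        (∀ i j, i ≠ j → (fun s => B.J (h i) s * B.J (h j) s) =ᵐ[μ] 0)

/-- The weak Banach-Saks property for a normed space `Z`: every weakly null sequence has a
subsequence whose arithmetic means converge to zero in norm. -/
def WeakBanachSaks (Z : Type*) [NormedAddCommGroup Z] [NormedSpace ℝ Z] : Prop :=
  ∀ z : ℕ → Z, (∀ φ : Z →L[ℝ] ℝ, Tendsto (fun n => φ (z n)) atTop (nhds 0)) →
    ∃ σ : ℕ → ℕ, StrictMono σ ∧
      Tendsto (fun n : ℕ => ‖(n : ℝ)⁻¹ • ∑ k ∈ Finset.range n, z (σ k)‖) atTop (nhds 0)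


/-- Lebesgue measure on `[0,1]`. -/
def mu01 : Measure ℝ := volume.restrict (Set.Icc (0 : ℝ) 1)

/-- The B.f.s. `X` on `[0,1]` is rearrangement invariant: if the distribution function of a
measurable `g` is dominated by that of (the function representing) `x ∈ X` (equivalently,
`g* ≤ (J x)*`), then `g` represents an element `y ∈ X` with `‖y‖ ≤ ‖x‖`. -/
def BFS.RI {X : Type*} [NormedAddCommGroup X] [NormedSpace ℝ X]
    (B : BFS ℝ mu01 X) : Prop :=
  ∀ (x : X) (g : ℝ → ℝ), AEMeasurable g mu01 →
    (∀ τ : ℝ, 0 < τ → mu01 {s | τ < |g s|} ≤ mu01 {s | τ < |B.J x s|}) →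
    ∃ y : X, B.J y =ᵐ[mu01] g ∧ ‖y‖ ≤ ‖x‖

/-- The kernel operator `T_K` applied to `|f|`: `T_K(|f|)(s) = ∫₀¹ K(s,y) |f(y)| dy`. -/
def TKabs (K : ℝ → ℝ → ℝ≥0∞) (f : ℝ → ℝ) (s : ℝ) : ℝ≥0∞ :=
  ∫⁻ y in Set.Icc (0 : ℝ) 1, K s y * ENNReal.ofReal |f y|

/-- Membership in the optimal domain `[T_K, X] = {f : T_K(|f|) ∈ X}`. -/
def memTK {X : Type*} [NormedAddCommGroup X] [NormedSpace ℝ X]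
    (B : BFS ℝ mu01 X) (K : ℝ → ℝ → ℝ≥0∞) (f : ℝ → ℝ) : Prop :=
  AEMeasurable f mu01 ∧
    ∃ x : X, ∀ᵐ s ∂mu01, TKabs K f s ≠ ⊤ ∧ (TKabs K f s).toReal = B.J x s

/-- The norm `‖f‖_{[T_K,X]} = ‖T_K(|f|)‖_X` on the optimal domain. -/
def nrmTK {X : Type*} [NormedAddCommGroup X] [NormedSpace ℝ X]
    (B : BFS ℝ mu01 X) (K : ℝ → ℝ → ℝ≥0∞) (f : ℝ → ℝ) : ℝ :=
  sInf {r : ℝ | ∃ x : X,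
    (∀ᵐ s ∂mu01, TKabs K f s ≠ ⊤ ∧ (TKabs K f s).toReal = B.J x s) ∧ r = ‖x‖}

/-!
A weakly* convergent bounded sequence in `L^∞[0,1]` has pointwise a.e. convergent images under
`T_K`, and by dominated convergence these images converge in `X`. Hence, for a bounded sequence
`f` in `[T_K,X]`, a subsequence makes the images of the truncations of `|f n|` at height `M`
converge for every `M`. The limits increase with `M` and are bounded in `X`, so they form a
Cauchy sequence by the splitting property of `X`. Along a diagonal subsequence `f n` is
therefore, uniformly in `n`, close to its truncations up to a remainder supported on a small
set, and a gliding hump makes the remainders disjoint.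

For a weakly null sequence the almost bounded parts have null Cesàro means because their
truncations are bounded in the Hilbert space `L²`. Multiplying the disjoint parts `h n` by a
common sign function shows that `T_K |h n|` is weakly null in `X`, where the weak Banach-Saks
property applies.
-/

/-! ### Banach function spaces -/

theorem eventually_exists_abs_sub_le_mul [IsFiniteMeasure μ] {v : ℕ → S → ℝ} {u w : S → ℝ}
    (hv : ∀ n, AEMeasurable (v n) μ) (hw : AEMeasurable w μ)
    (hlim : ∀ᵐ s ∂μ, Tendsto (fun n => v n s) atTop (𝓝 (u s)))
    (hzero : ∀ᵐ s ∂μ, w s = 0 → ∀ n, v n s = u s) {η δ : ℝ} (hη : 0 < η) (hδ : 0 < δ) :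
    ∀ᶠ n in atTop, ∃ A, MeasurableSet A ∧ μ A < ENNReal.ofReal δ ∧
      ∀ᵐ s ∂μ, s ∉ A → |v n s - u s| ≤ η * |w s| := by
  have hu : AEMeasurable u μ := aemeasurable_of_tendsto_metrizable_ae atTop hv hlim
  have ratio_tendsto : TendstoInMeasure μ (fun n s => (v n s - u s) / w s) atTop 0 := by
    refine tendstoInMeasure_of_tendsto_ae
      (fun n => (((hv n).sub hu).div hw).aestronglyMeasurable) ?_
    filter_upwards [hlim] with s hs
    simpa using (hs.sub_const (u s)).div_const (w s)
  filter_upwards [(tendstoInMeasure_iff_norm.1 ratio_tendsto η hη).eventually_lt_const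
    (ENNReal.ofReal_pos.2 hδ)] with n hn
  refine ⟨toMeasurable μ _, measurableSet_toMeasurable _ _,
    (measure_toMeasurable _).trans_lt hn, ?_⟩
  filter_upwards [hzero] with s hs hsA
  have ratio_lt : |v n s - u s| / |w s| < η := by
    simpa using fun h => hsA (subset_toMeasurable _ _ h)
  by_cases hws : w s = 0
  · simp [hs hws n, hws]
  · rw [div_lt_iff₀ (abs_pos.2 hws)] at ratio_lt
    exact ratio_lt.le

theorem exists_sub_le_mul_of_monotone [IsFiniteMeasure μ] {v : ℕ → S → ℝ}
    (hv : ∀ n, AEMeasurable (v n) μ) (hpos : ∀ᵐ s ∂μ, ∀ n, 0 ≤ v n s)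
    (hmono : ∀ᵐ s ∂μ, Monotone fun n => v n s)
    (hbdd : ∀ᵐ s ∂μ, BddAbove (Set.range fun n => v n s)) {η δ : ℝ} (hη : 0 < η) (hδ : 0 < δ) :
    ∃ k A, MeasurableSet A ∧ μ A < ENNReal.ofReal δ ∧
      ∀ᵐ s ∂μ, s ∉ A → ∀ n, v n s - v k s ≤ η * v k s := by
  have hlim : ∀ᵐ s ∂μ, Tendsto (fun n => v n s) atTop (𝓝 (⨆ n, v n s)) := by
    filter_upwards [hbdd, hmono] with s hbs hms using tendsto_atTop_ciSup hms hbs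
  have hzero : ∀ᵐ s ∂μ, (⨆ n, v n s) = 0 → ∀ n, v n s = ⨆ n, v n s := by
    filter_upwards [hpos, hbdd] with s hs hbs h n
    linarith [hs n, le_ciSup hbs n]
  have hη' : 0 < η / (1 + η) := by positivity
  obtain ⟨k, A, hA, hAδ, hclose⟩ := (eventually_exists_abs_sub_le_mul hv
    (aemeasurable_of_tendsto_metrizable_ae atTop hv hlim) hlim hzero hη' hδ).exists
  refine ⟨k, A, hA, hAδ, ?_⟩
  filter_upwards [hclose, hpos, hbdd] with s hs hps hbs hsA n
  have le_sup : ∀ n, v n s ≤ ⨆ n, v n s := le_ciSup hbs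
  have hclose_s := hs hsA
  rw [abs_sub_comm, abs_of_nonneg (sub_nonneg.2 (le_sup k)),
    abs_of_nonneg ((hps k).trans (le_sup k)), div_mul_eq_mul_div,
    le_div_iff₀ (by positivity)] at hclose_s
  linarith [le_sup n]

namespace BFS

variable {B : BFS S μ X}

theorem ext_ae (B : BFS S μ X) {x y : X} (h : B.J x =ᵐ[μ] B.J y) : x = y := by
  refine sub_eq_zero.1 (B.eq_zero _ ?_)
  filter_upwards [h] with s hs
  simp [hs]

theorem norm_mono (B : BFS S μ X) {x y : X} (h : ∀ᵐ s ∂μ, |B.J x s| ≤ |B.J y s|) :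
    ‖x‖ ≤ ‖y‖ := by
  obtain ⟨z, hz, hn⟩ := B.ideal y (B.J x) (B.aemeasurable x) h
  rwa [B.ext_ae hz] at hn

theorem exists_indicator (B : BFS S μ X) (x : X) {A : Set S} (hA : MeasurableSet A) :
    ∃ y : X, B.J y =ᵐ[μ] A.indicator (B.J x) ∧ ‖y‖ ≤ ‖x‖ :=
  B.ideal x _ ((B.aemeasurable x).indicator hA)
    (ae_of_all _ fun s => by simpa using norm_indicator_le_norm_self (s := A) (B.J x) s)

theorem exists_abs (B : BFS S μ X) (x : X) :
    ∃ y : X, B.J y =ᵐ[μ] (fun s => |B.J x s|) ∧ ‖y‖ ≤ ‖x‖ :=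
  B.ideal x _ (B.aemeasurable x).abs (ae_of_all _ fun _ => (abs_abs _).le)

theorem norm_le_norm_add_norm (B : BFS S μ X) {x y z : X}
    (h : ∀ᵐ s ∂μ, |B.J x s| ≤ |B.J y s| + |B.J z s|) : ‖x‖ ≤ ‖y‖ + ‖z‖ := by
  obtain ⟨y', hy', hy'_le⟩ := B.exists_abs y
  obtain ⟨z', hz', hz'_le⟩ := B.exists_abs z
  have : ‖x‖ ≤ ‖y' + z'‖ := by
    refine B.norm_mono ?_
    filter_upwards [h, hy', hz'] with s h hy hz
    rw [map_add, Pi.add_apply, hy, hz]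
    exact h.trans (le_abs_self _)
  linarith [norm_add_le y' z']

theorem UnifAC.of_forall_abs_le_add {K L : Set X} (hK : B.UnifAC K)
    (h : ∀ x ∈ L, ∃ y ∈ K, ∃ z ∈ K, ∀ᵐ s ∂μ, |B.J x s| ≤ |B.J y s| + |B.J z s|) :
    B.UnifAC L := by
  intro ε hε
  obtain ⟨δ, hδ, small⟩ := hK (ε / 2) (half_pos hε)
  refine ⟨δ, hδ, fun A hA hAδ x hx xA hxA => ?_⟩
  obtain ⟨y, hy, z, hz, hxyz⟩ := h x hx
  obtain ⟨yA, hyA, -⟩ := B.exists_indicator y hA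
  obtain ⟨zA, hzA, -⟩ := B.exists_indicator z hA
  have : ‖xA‖ ≤ ‖yA‖ + ‖zA‖ := by
    refine B.norm_le_norm_add_norm ?_
    filter_upwards [hxyz, hxA, hyA, hzA] with s h h₁ h₂ h₃
    rw [h₁, h₂, h₃]
    by_cases hs : s ∈ A
    · simpa [hs] using h
    · simp [hs]
  linarith [small A hA hAδ y hy yA hyA, small A hA hAδ z hz zA hzA]

/- Where `h (σ n)` does not vanish, `h (σ (n + 1))` does, so there
`|f (σ n)| ≤ |f (σ (n + 1))| = |g (n + 1)|`. -/
theorem SSP.exists_subseq_unifAC (hX : B.SSP) {f : ℕ → X} (hf : ∃ C, ∀ n, ‖f n‖ ≤ C)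
    (hmono : ∀ᵐ s ∂μ, Monotone fun n => |B.J (f n) s|) :
    ∃ σ : ℕ → ℕ, StrictMono σ ∧ B.UnifAC (Set.range (f ∘ σ)) := by
  obtain ⟨σ, hσ, g, h, hfgh, -, hac, hdisj⟩ := hX f hf
  refine ⟨σ, hσ, hac.of_forall_abs_le_add ?_⟩
  rintro _ ⟨n, rfl⟩
  refine ⟨g n, ⟨n, rfl⟩, g (n + 1), ⟨n + 1, rfl⟩, ?_⟩
  filter_upwards [hmono, hdisj n (n + 1) n.lt_succ_self.ne] with s hs hns
  have f_eq : ∀ k, B.J (f (σ k)) s = B.J (g k) s + B.J (h k) s := fun k => by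
    rw [hfgh k, map_add, Pi.add_apply]
  rcases mul_eq_zero.1 hns with h0 | h0
  · simp [f_eq, h0]
  · refine (hs (hσ.monotone n.le_succ)).trans ?_
    simp [f_eq, h0]

theorem SSP.acNorm (hX : B.SSP) : B.ACNorm := by
  intro x ε hε
  obtain ⟨_, -, hac⟩ := hX.exists_subseq_unifAC (f := fun _ => x) ⟨‖x‖, fun _ => le_rfl⟩
    (ae_of_all _ fun _ => monotone_const)
  obtain ⟨δ, hδ, small⟩ := hac ε hε
  exact ⟨δ, hδ, fun A hA hAδ => small A hA hAδ x ⟨0, rfl⟩⟩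

theorem ACNorm.tendsto_zero_of_dominated [IsFiniteMeasure μ] (hB : B.ACNorm) {x : ℕ → X} {z : X}
    (hdom : ∀ n, ∀ᵐ s ∂μ, |B.J (x n) s| ≤ |B.J z s|)
    (hlim : ∀ᵐ s ∂μ, Tendsto (fun n => B.J (x n) s) atTop (𝓝 0)) : Tendsto x atTop (𝓝 0) := by
  refine tendsto_zero_iff_norm_tendsto_zero.2 (Metric.tendsto_nhds.2 fun ε hε => ?_)
  obtain ⟨δ, hδ, small⟩ := hB z (ε / 4) (by positivity)
  have hη : 0 < ε / (4 * (‖z‖ + 1)) := by positivity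
  have hzero : ∀ᵐ s ∂μ, B.J z s = 0 → ∀ n, B.J (x n) s = 0 := by
    filter_upwards [ae_all_iff.2 hdom] with s hs hz n
    simpa [hz] using hs n
  filter_upwards [eventually_exists_abs_sub_le_mul (fun n => B.aemeasurable (x n))
    (B.aemeasurable z) hlim hzero hη hδ] with n ⟨A, hA, hAδ, hclose⟩
  obtain ⟨w, hw, -⟩ := B.exists_indicator z hA
  have norm_le : ‖x n‖ ≤ ‖(ε / (4 * (‖z‖ + 1))) • z‖ + ‖w‖ := by
    refine B.norm_le_norm_add_norm ?_
    filter_upwards [hclose, hdom n, hw] with s hs hxs hws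
    rw [map_smul, Pi.smul_apply, smul_eq_mul, hws, abs_mul, abs_of_pos hη]
    by_cases hsA : s ∈ A
    · rw [Set.indicator_of_mem hsA]
      exact hxs.trans (le_add_of_nonneg_left (by positivity))
    · simpa [hsA] using hs hsA
  have hηz : ε / (4 * (‖z‖ + 1)) * ‖z‖ ≤ ε / 4 := by
    rw [div_mul_eq_mul_div, div_le_div_iff₀ (by positivity) (by norm_num)]
    nlinarith
  rw [norm_smul, Real.norm_of_nonneg hη.le] at norm_le
  rw [dist_zero_right, norm_norm]
  linarith [small A hA hAδ w hw]

theorem ACNorm.exists_tendsto_of_dominated [IsFiniteMeasure μ] (hB : B.ACNorm) {x : ℕ → X} {z : X}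
    {u : S → ℝ} (hdom : ∀ n, ∀ᵐ s ∂μ, |B.J (x n) s| ≤ |B.J z s|)
    (hlim : ∀ᵐ s ∂μ, Tendsto (fun n => B.J (x n) s) atTop (𝓝 (u s))) :
    ∃ y : X, B.J y =ᵐ[μ] u ∧ Tendsto x atTop (𝓝 y) := by
  have hu : AEMeasurable u μ :=
    aemeasurable_of_tendsto_metrizable_ae atTop (fun n => B.aemeasurable (x n)) hlim
  have u_le : ∀ᵐ s ∂μ, |u s| ≤ |B.J z s| := by
    filter_upwards [ae_all_iff.2 hdom, hlim] with s hs hsu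
    exact le_of_tendsto hsu.abs (Eventually.of_forall hs)
  obtain ⟨y, hy, -⟩ := B.ideal z u hu u_le
  refine ⟨y, hy, tendsto_sub_nhds_zero_iff.1
    (hB.tendsto_zero_of_dominated (z := (2 : ℝ) • z) ?_ ?_)⟩
  · intro n
    filter_upwards [hdom n, u_le, hy] with s hs hus hys
    rw [map_sub, Pi.sub_apply, hys, map_smul, Pi.smul_apply, smul_eq_mul, abs_mul, Nat.abs_ofNat]
    linarith [abs_sub (B.J (x n) s) (u s)]
  · filter_upwards [hlim, hy] with s hs hys
    simpa [hys] using hs.sub_const (u s)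

theorem ACNorm.norm_le_of_tendsto_atTop [IsFiniteMeasure μ] (hB : B.ACNorm) {x : ℕ → X} {C : ℝ}
    (hC : ∀ n, ‖x n‖ ≤ C) (hpos : ∀ᵐ s ∂μ, ∀ n, 0 ≤ B.J (x n) s) {z : X}
    (hz : ∀ᵐ s ∂μ, 0 ≤ B.J z s)
    (hlim : ∀ᵐ s ∂μ, B.J z s ≠ 0 → Tendsto (fun n => B.J (x n) s) atTop atTop) : ‖z‖ ≤ C := by
  have min_bounds : ∀ᵐ s ∂μ, ∀ n, |min (B.J (x n) s) (B.J z s)| ≤ |B.J (x n) s| ∧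
      |min (B.J (x n) s) (B.J z s)| ≤ |B.J z s| := by
    filter_upwards [hpos, hz] with s hs hzs n
    have := le_min (hs n) hzs
    exact ⟨abs_le_abs_of_nonneg this (min_le_left _ _),
      abs_le_abs_of_nonneg this (min_le_right _ _)⟩
  choose w hw hw_norm using fun n => B.ideal (x n) (fun s => min (B.J (x n) s) (B.J z s))
    ((B.aemeasurable _).min (B.aemeasurable _)) (min_bounds.mono fun s hs => (hs n).1)
  obtain ⟨y, hy, hwy⟩ := hB.exists_tendsto_of_dominated (x := w) (z := z) (u := B.J z)
    (fun n => by filter_upwards [hw n, min_bounds] with s hws hs using hws ▸ (hs n).2) (by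
      filter_upwards [ae_all_iff.2 hw, hlim, hpos] with s hws hs hps
      simp only [hws]
      by_cases h : B.J z s = 0
      · simp [h, hps]
      · refine tendsto_const_nhds.congr' ?_
        filter_upwards [(hs h).eventually_ge_atTop (B.J z s)] with n hn
        exact (min_eq_right hn).symm)
  rw [← B.ext_ae hy]
  exact le_of_tendsto hwy.norm (Eventually.of_forall fun n => (hw_norm n).trans (hC n))

theorem ACNorm.ae_eq_zero_of_tendsto_atTop [IsFiniteMeasure μ] (hB : B.ACNorm) {x : ℕ → X} {C : ℝ}
    (hC : ∀ n, ‖x n‖ ≤ C) (hpos : ∀ᵐ s ∂μ, ∀ n, 0 ≤ B.J (x n) s) {D : Set S} (hD : MeasurableSet D)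
    (hlim : ∀ᵐ s ∂μ, s ∈ D → Tendsto (fun n => B.J (x n) s) atTop atTop)
    {z : X} (hz : ∀ᵐ s ∂μ, 0 ≤ B.J z s) : ∀ᵐ s ∂μ, s ∈ D → B.J z s = 0 := by
  obtain ⟨zD, hzD, -⟩ := B.exists_indicator z hD
  have norm_le : ∀ M : ℕ, 0 < M → ‖zD‖ ≤ C / M := by
    intro M hM
    have hM' : (0 : ℝ) < (M : ℝ)⁻¹ := inv_pos.2 (Nat.cast_pos.2 hM)
    refine hB.norm_le_of_tendsto_atTop (x := fun n => (M : ℝ)⁻¹ • x n) (fun n => ?_) ?_ ?_ ?_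
    · rw [norm_smul, norm_inv, Real.norm_natCast, div_eq_inv_mul]
      gcongr
      exact hC n
    · filter_upwards [hpos] with s hs n
      simpa using mul_nonneg hM'.le (hs n)
    · filter_upwards [hzD, hz] with s hs hzs
      exact hs ▸ Set.indicator_apply_nonneg fun _ => hzs
    · filter_upwards [hzD, hlim] with s hs hls h
      simpa using (hls (Set.mem_of_indicator_ne_zero (hs ▸ h))).const_mul_atTop hM'
  have zD_eq : zD = 0 := norm_le_zero_iff.1 <|
    ge_of_tendsto (tendsto_const_div_atTop_nhds_zero_nat C) <|
      (eventually_gt_atTop 0).mono norm_le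
  filter_upwards [hzD] with s hs h
  simpa [zD_eq, h] using hs.symm

theorem ACNorm.ae_bddAbove_of_monotone [IsFiniteMeasure μ] (hB : B.ACNorm) {x : ℕ → X} {C : ℝ}
    (hC : ∀ n, ‖x n‖ ≤ C) (hpos : ∀ᵐ s ∂μ, ∀ n, 0 ≤ B.J (x n) s)
    (hmono : ∀ᵐ s ∂μ, Monotone fun n => B.J (x n) s) :
    ∀ᵐ s ∂μ, BddAbove (Set.range fun n => B.J (x n) s) := by
  let v : S → ℝ≥0∞ := fun s => ⨆ n, ENNReal.ofReal (B.J (x n) s)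
  have hv : AEMeasurable v μ := AEMeasurable.iSup fun n => (B.aemeasurable _).ennreal_ofReal
  let D : Set S := {s | hv.mk v s = ⊤}
  have hD : MeasurableSet D := hv.measurable_mk (measurableSet_singleton ⊤)
  have tendsto_atTop_on : ∀ᵐ s ∂μ, s ∈ D → Tendsto (fun n => B.J (x n) s) atTop atTop := by
    filter_upwards [hv.ae_eq_mk, hmono] with s hvs hs hsD
    refine (tendsto_atTop_of_monotone hs).resolve_right ?_
    rintro ⟨l, hl⟩
    have : v s ≤ ENNReal.ofReal l :=
      iSup_le fun n => ENNReal.ofReal_le_ofReal (hs.ge_of_tendsto hl n)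
    simp [hvs.trans hsD] at this
  have eq_zero_on : ∀ᵐ s ∂μ, ∀ k, s ∈ D → B.J (x k) s = 0 := ae_all_iff.2 fun k =>
    hB.ae_eq_zero_of_tendsto_atTop hC hpos hD tendsto_atTop_on (hpos.mono fun s hs => hs k)
  filter_upwards [hv.ae_eq_mk, tendsto_atTop_on, eq_zero_on] with s hvs hlim hzero
  have hsD : s ∉ D := fun h => by
    simpa [hzero _ h, not_tendsto_const_atTop] using hlim h
  refine ⟨(v s).toReal, ?_⟩
  rintro _ ⟨n, rfl⟩
  exact (ENNReal.ofReal_le_iff_le_toReal (hvs ▸ hsD)).1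
    (le_iSup (fun n => ENNReal.ofReal (B.J (x n) s)) n)

theorem UnifAC.cauchySeq_of_monotone [IsFiniteMeasure μ] {x : ℕ → X} {C : ℝ} (hC : ∀ n, ‖x n‖ ≤ C)
    (hac : B.UnifAC (Set.range x)) (hpos : ∀ᵐ s ∂μ, ∀ n, 0 ≤ B.J (x n) s)
    (hmono : ∀ᵐ s ∂μ, Monotone fun n => B.J (x n) s)
    (hbdd : ∀ᵐ s ∂μ, BddAbove (Set.range fun n => B.J (x n) s)) : CauchySeq x := by
  rw [Metric.cauchySeq_iff']
  intro ε hε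
  obtain ⟨δ, hδ, small⟩ := hac (ε / 4) (by positivity)
  have hC0 : 0 ≤ C := (norm_nonneg _).trans (hC 0)
  have hη : 0 < ε / (4 * (C + 1)) := by positivity
  obtain ⟨k, A, hA, hAδ, hclose⟩ := exists_sub_le_mul_of_monotone (fun n => B.aemeasurable (x n))
    hpos hmono hbdd hη hδ
  refine ⟨k, fun n hn => ?_⟩
  obtain ⟨w, hw, -⟩ := B.exists_indicator (x n) hA
  have norm_le : ‖x n - x k‖ ≤ ‖w‖ + ‖(ε / (4 * (C + 1))) • x k‖ := by
    refine B.norm_le_norm_add_norm ?_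
    filter_upwards [hclose, hw, hpos, hmono] with s hs hws hps hms
    have hkn : B.J (x k) s ≤ B.J (x n) s := hms hn
    have := mul_nonneg hη.le (hps k)
    simp only [map_sub, map_smul, Pi.sub_apply, Pi.smul_apply, smul_eq_mul, hws]
    rw [abs_of_nonneg (sub_nonneg.2 hkn), abs_of_nonneg this]
    by_cases hsA : s ∈ A
    · rw [Set.indicator_of_mem hsA, abs_of_nonneg (hps n)]
      linarith [hps k]
    · simpa [hsA] using hs hsA n
  have hηC : ε / (4 * (C + 1)) * ‖x k‖ ≤ ε / 4 := calc
    ε / (4 * (C + 1)) * ‖x k‖ ≤ ε / (4 * (C + 1)) * (C + 1) := by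
      gcongr
      linarith [hC k]
    _ = ε / 4 := by field_simp
  rw [norm_smul, Real.norm_of_nonneg hη.le] at norm_le
  rw [dist_eq_norm]
  linarith [small A hA hAδ (x n) ⟨n, rfl⟩ w hw]

theorem SSP.cauchySeq_of_monotone [IsFiniteMeasure μ] (hX : B.SSP) {x : ℕ → X} {C : ℝ}
    (hC : ∀ n, ‖x n‖ ≤ C) (hpos : ∀ᵐ s ∂μ, ∀ n, 0 ≤ B.J (x n) s)
    (hmono : ∀ᵐ s ∂μ, Monotone fun n => B.J (x n) s) : CauchySeq x := by
  have hbdd := hX.acNorm.ae_bddAbove_of_monotone hC hpos hmono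
  have habs : ∀ᵐ s ∂μ, Monotone fun n => |B.J (x n) s| := by
    filter_upwards [hpos, hmono] with s hps hms
    simpa only [abs_of_nonneg (hps _)] using hms
  obtain ⟨σ, hσ, hac⟩ := hX.exists_subseq_unifAC ⟨C, hC⟩ habs
  have cauchy_subseq : CauchySeq (x ∘ σ) := hac.cauchySeq_of_monotone (fun n => hC _)
    (hpos.mono fun s hs n => hs _) (hmono.mono fun s hs => hs.comp hσ.monotone)
    (hbdd.mono fun s hs => hs.mono (Set.range_comp_subset_range σ fun n => B.J (x n) s))
  rw [Metric.cauchySeq_iff'] at cauchy_subseq ⊢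
  intro ε hε
  obtain ⟨N, hN⟩ := cauchy_subseq ε hε
  refine ⟨σ N, fun n hn => ?_⟩
  have hNn : N ≤ n := (hσ.id_le N).trans hn
  refine lt_of_le_of_lt ?_ (hN n hNn)
  rw [dist_eq_norm, dist_eq_norm]
  refine B.norm_mono ?_
  filter_upwards [hmono] with s hs
  simp only [map_sub, Pi.sub_apply, Function.comp_apply]
  exact abs_le_abs_of_nonneg (sub_nonneg.2 (hs hn)) (sub_le_sub_right (hs (hσ.id_le n)) _)

end BFS

/-! ### Subsequences and arithmetic means -/

theorem exists_strictMono_forall_lt {P : ℕ → ℕ → ℕ → Prop}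
    (h : ∀ m i, ∀ᶠ n in atTop, P m i n) :
    ∃ τ : ℕ → ℕ, StrictMono τ ∧ ∀ i j, i < j → P j (τ i) (τ j) := by
  have exists_next : ∀ m p, ∃ n, p < n ∧ ∀ i ≤ p, P m i n := fun m p =>
    ((eventually_gt_atTop p).and
      ((eventually_all_finite (Set.finite_Iic p)).2 fun i _ => h m i)).exists
  choose next lt_next next_spec using exists_next
  let τ : ℕ → ℕ := fun m => Nat.rec 0 (fun m p => next (m + 1) p) m
  have hτ : StrictMono τ := strictMono_nat_of_lt_succ fun m => lt_next (m + 1) (τ m)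
  refine ⟨τ, hτ, fun i j hij => ?_⟩
  obtain ⟨k, rfl⟩ := Nat.exists_eq_add_one_of_ne_zero (Nat.ne_zero_of_lt hij)
  exact next_spec (k + 1) (τ k) (τ i) (hτ.monotone (Nat.lt_succ_iff.1 hij))

/-- The arithmetic mean of the first `n` terms of `f`; its value at `n = 0` is `0`. -/
def cesaroMean {E : Type*} [AddCommGroup E] [Module ℝ E] (f : ℕ → E) (n : ℕ) : E :=
  (n : ℝ)⁻¹ • ∑ k ∈ Finset.range n, f k

section CesaroMean

variable {E F : Type*} [AddCommGroup E] [Module ℝ E] [AddCommGroup F] [Module ℝ F]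

theorem cesaroMean_add (f g : ℕ → E) (n : ℕ) :
    cesaroMean (fun k => f k + g k) n = cesaroMean f n + cesaroMean g n := by
  simp only [cesaroMean, Finset.sum_add_distrib, smul_add]

theorem cesaroMean_sub (f g : ℕ → E) (n : ℕ) :
    cesaroMean (fun k => f k - g k) n = cesaroMean f n - cesaroMean g n := by
  simp only [cesaroMean, Finset.sum_sub_distrib, smul_sub]

theorem cesaroMean_const (a : E) {n : ℕ} (hn : n ≠ 0) : cesaroMean (fun _ => a) n = a := by
  rw [cesaroMean, Finset.sum_const, Finset.card_range, ← Nat.cast_smul_eq_nsmul ℝ, smul_smul,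
    inv_mul_cancel₀ (Nat.cast_ne_zero.2 hn), one_smul]

theorem map_cesaroMean (L : E →ₗ[ℝ] F) (f : ℕ → E) (n : ℕ) :
    L (cesaroMean f n) = cesaroMean (fun k => L (f k)) n := by
  simp only [cesaroMean, map_smul, map_sum]

theorem cesaroMean_le {f : ℕ → ℝ} {C : ℝ} (hC : 0 ≤ C) (hf : ∀ n, f n ≤ C) (n : ℕ) :
    cesaroMean f n ≤ C := by
  rcases eq_or_ne n 0 with rfl | hn
  · simpa [cesaroMean] using hC
  · rw [← cesaroMean_const C hn]
    exact smul_le_smul_of_nonneg_left (Finset.sum_le_sum fun k _ => hf k) (by positivity)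

theorem abs_cesaroMean_le (f : ℕ → ℝ) (n : ℕ) :
    |cesaroMean f n| ≤ cesaroMean (fun k => |f k|) n := by
  rw [cesaroMean, smul_eq_mul, abs_mul, abs_of_nonneg (by positivity : (0 : ℝ) ≤ (n : ℝ)⁻¹)]
  exact mul_le_mul_of_nonneg_left (Finset.abs_sum_le_sum_abs _ _) (by positivity)

end CesaroMean

section Hilbert

variable {H : Type*} [NormedAddCommGroup H] [InnerProductSpace ℝ H]

theorem norm_sum_sq_le_of_almost_orthogonal {d : ℕ → H} {A C : ℝ} (hC : ∀ n, ‖d n‖ ≤ C)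
    (hd : ∀ i j, i < j → |inner ℝ (d i) (d j)| ≤ A / (j + 1)) (n : ℕ) :
    ‖∑ k ∈ Finset.range n, d k‖ ^ 2 ≤ (C ^ 2 + 2 * A) * n := by
  have hA : 0 ≤ A := by
    have := (abs_nonneg _).trans (hd 0 1 Nat.zero_lt_one)
    norm_num at this
    linarith
  induction n with
  | zero => simp
  | succ n ih =>
    have inner_le : inner ℝ (∑ k ∈ Finset.range n, d k) (d n) ≤ A := calc
      inner ℝ (∑ k ∈ Finset.range n, d k) (d n) = ∑ k ∈ Finset.range n, inner ℝ (d k) (d n) :=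
        sum_inner _ _ _
      _ ≤ ∑ _k ∈ Finset.range n, A / (n + 1) :=
        Finset.sum_le_sum fun k hk => (le_abs_self _).trans (hd k n (Finset.mem_range.1 hk))
      _ = A * (n / (n + 1)) := by
        rw [Finset.sum_const, Finset.card_range, nsmul_eq_mul]
        ring
      _ ≤ A := mul_le_of_le_one_right hA (div_le_one_of_le₀ (by linarith) (by positivity))
    have norm_sq_le : ‖d n‖ ^ 2 ≤ C ^ 2 := by
      gcongr
      exact hC n
    rw [Finset.sum_range_succ, norm_add_sq_real]
    push_cast
    linarith

theorem tendsto_cesaroMean_zero_of_almost_orthogonal {d : ℕ → H} {C : ℝ} (hC : ∀ n, ‖d n‖ ≤ C)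
    {M : ℕ} (hd : ∀ i j, i < j → M ≤ j → |inner ℝ (d i) (d j)| ≤ 1 / (j + 1)) :
    Tendsto (cesaroMean d) atTop (𝓝 0) := by
  have hC0 : 0 ≤ C := (norm_nonneg _).trans (hC 0)
  have inner_le : ∀ i j, i < j → |inner ℝ (d i) (d j)| ≤ (1 + C ^ 2 * (M + 1)) / (j + 1) := by
    intro i j hij
    rcases le_or_gt M j with hMj | hMj
    · refine (hd i j hij hMj).trans ?_
      gcongr
      linarith [show 0 ≤ C ^ 2 * ((M : ℝ) + 1) by positivity]
    · have hjM : (j : ℝ) + 1 ≤ M + 1 := by exact_mod_cast Nat.succ_le_succ hMj.le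
      rw [le_div_iff₀ (by positivity)]
      calc |inner ℝ (d i) (d j)| * (j + 1) ≤ (‖d i‖ * ‖d j‖) * (M + 1) := by
            gcongr
            exact abs_real_inner_le_norm _ _
        _ ≤ (C * C) * (M + 1) := by gcongr <;> apply hC
        _ ≤ 1 + C ^ 2 * (M + 1) := by linarith
  have hlim : Tendsto (fun n : ℕ => √((C ^ 2 + 2 * (1 + C ^ 2 * (M + 1))) / n)) atTop (𝓝 0) := by
    simpa using (tendsto_const_div_atTop_nhds_zero_nat (C ^ 2 + 2 * (1 + C ^ 2 * (M + 1)))).sqrt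
  refine squeeze_zero_norm' ?_ hlim
  filter_upwards [eventually_gt_atTop 0] with n hn
  have hn' : (0 : ℝ) < n := Nat.cast_pos.2 hn
  refine Real.le_sqrt_of_sq_le ?_
  rw [cesaroMean, norm_smul, norm_inv, Real.norm_natCast, mul_pow, inv_pow, ← div_eq_inv_mul,
    div_le_div_iff₀ (by positivity) hn', sq (n : ℝ), ← mul_assoc]
  gcongr
  exact norm_sum_sq_le_of_almost_orthogonal hC inner_le n

theorem exists_subseq_tendsto_cesaroMean_zero {d : ℕ → ℕ → H} {C : ℕ → ℝ}
    (hC : ∀ n M, ‖d n M‖ ≤ C M)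
    (hd : ∀ M v, Tendsto (fun n => inner ℝ v (d n M)) atTop (𝓝 0)) :
    ∃ τ : ℕ → ℕ, StrictMono τ ∧ ∀ ρ : ℕ → ℕ, StrictMono ρ → ∀ M,
      Tendsto (cesaroMean fun k => d (τ (ρ k)) M) atTop (𝓝 0) := by
  obtain ⟨τ, hτ, inner_le⟩ := exists_strictMono_forall_lt
    (P := fun m i n => ∀ M ≤ m, |inner ℝ (d i M) (d n M)| ≤ 1 / (m + 1)) fun m i =>
    (eventually_all_finite (Set.finite_Iic m)).2 fun M _ =>
      (by simpa using (hd M (d i M)).abs :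
        Tendsto (fun n => |inner ℝ (d i M) (d n M)|) atTop (𝓝 0)).eventually_le_const
        (by positivity)
  refine ⟨τ, hτ, fun ρ hρ M =>
    tendsto_cesaroMean_zero_of_almost_orthogonal (fun n => hC _ M) (M := M) fun i j hij hMj => ?_⟩
  have hj : j ≤ ρ j := hρ.id_le j
  refine (inner_le (ρ i) (ρ j) (hρ hij) M (hMj.trans hj)).trans ?_
  gcongr

end Hilbert

theorem exists_subseq_tendsto_weakDual {V : Type*} [NormedAddCommGroup V] [NormedSpace ℝ V]
    [TopologicalSpace.SeparableSpace V] {φ : ℕ → ℕ → (V →L[ℝ] ℝ)} {C : ℕ → ℝ}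
    (hφ : ∀ n M, ‖φ n M‖ ≤ C M) :
    ∃ σ : ℕ → ℕ, StrictMono σ ∧ ∃ ψ : ℕ → (V →L[ℝ] ℝ),
      ∀ M v, Tendsto (fun n => φ (σ n) M v) atTop (𝓝 (ψ M v)) := by
  let ball (M : ℕ) : Set (WeakDual ℝ V) :=
    WeakDual.toStrongDual ⁻¹' Metric.closedBall (0 : StrongDual ℝ V) (C M)
  have hball : ∀ M, IsCompact (ball M) := fun M => WeakDual.isCompact_closedBall _ _
  have (M : ℕ) : CompactSpace (ball M) := isCompact_iff_compactSpace.1 (hball M)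
  have (M : ℕ) : TopologicalSpace.MetrizableSpace (ball M) :=
    WeakDual.metrizable_of_isCompact ℝ V (ball M) (hball M)
  let Φ (n M : ℕ) : ball M := ⟨StrongDual.toWeakDual (φ n M), by simpa [ball] using hφ n M⟩
  obtain ⟨ψ, σ, hσ, hψ⟩ := CompactSpace.tendsto_subseq Φ
  refine ⟨σ, hσ, fun M => WeakDual.toStrongDual (ψ M).1, fun M v => ?_⟩
  exact (((WeakDual.eval_continuous v).comp continuous_subtype_val).tendsto (ψ M)).comp
    (tendsto_pi_nhds.1 hψ M)

theorem exists_subseq_tendsto_cesaroMean {H : Type*} [NormedAddCommGroup H]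
    [InnerProductSpace ℝ H] [CompleteSpace H] [TopologicalSpace.SeparableSpace H]
    {a : ℕ → ℕ → H} {C : ℕ → ℝ} (ha : ∀ n M, ‖a n M‖ ≤ C M) :
    ∃ τ : ℕ → ℕ, StrictMono τ ∧ ∃ G : ℕ → H, ∀ ρ : ℕ → ℕ, StrictMono ρ → ∀ M,
      Tendsto (cesaroMean fun k => a (τ (ρ k)) M) atTop (𝓝 (G M)) := by
  obtain ⟨σ, hσ, ψ, hψ⟩ := exists_subseq_tendsto_weakDual (V := H)
    (φ := fun n M => innerSL ℝ (a n M)) fun n M => (innerSL_apply_norm ℝ (a n M)).trans_le (ha n M)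
  let G (M : ℕ) : H := (InnerProductSpace.toDual ℝ H).symm (ψ M)
  have sub_weaklyNull : ∀ M v, Tendsto (fun n => inner ℝ v (a (σ n) M - G M)) atTop (𝓝 0) := by
    intro M v
    have := (hψ M v).sub_const (ψ M v)
    rw [sub_self] at this
    refine this.congr fun n => ?_
    rw [inner_sub_right, real_inner_comm _ v, real_inner_comm _ v,
      InnerProductSpace.toDual_symm_apply, innerSL_apply_apply]
  obtain ⟨τ, hτ, hlim⟩ := exists_subseq_tendsto_cesaroMean_zero (C := fun M => C M + ‖G M‖)
    (fun n M => (norm_sub_le _ _).trans (by gcongr; exact ha _ M)) sub_weaklyNull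
  refine ⟨σ ∘ τ, hσ.comp hτ, G, fun ρ hρ M => tendsto_sub_nhds_zero_iff.1 ?_⟩
  refine (hlim ρ hρ M).congr' ?_
  filter_upwards [eventually_ne_atTop 0] with n hn
  rw [cesaroMean_sub, cesaroMean_const _ hn, Function.comp_def]

/-! ### Normed ideals of measurable functions -/

/-- A vector space `{f | mem f}` of a.e. measurable functions which is solid for the a.e. order,
with a monotone seminorm `nrm`. Functions agreeing a.e. are not identified, and `nrm` may vanish on
functions that do not. -/
structure IsNormedIdeal (μ : Measure S) (mem : (S → ℝ) → Prop) (nrm : (S → ℝ) → ℝ) : Prop where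
  aemeasurable : ∀ {f}, mem f → AEMeasurable f μ
  zero_mem : mem 0
  add_mem : ∀ {f g}, mem f → mem g → mem (f + g)
  smul_mem : ∀ (c : ℝ) {f}, mem f → mem (c • f)
  nrm_add_le : ∀ {f g}, mem f → mem g → nrm (f + g) ≤ nrm f + nrm g
  nrm_smul : ∀ (c : ℝ) {f}, mem f → nrm (c • f) = |c| * nrm f
  solid : ∀ {f g}, mem f → AEMeasurable g μ → (∀ᵐ s ∂μ, |g s| ≤ |f s|) → mem g ∧ nrm g ≤ nrm f

variable {mem : (S → ℝ) → Prop} {nrm : (S → ℝ) → ℝ}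

namespace IsNormedIdeal

section Space

variable (hI : IsNormedIdeal μ mem nrm)

/-- The subspace `{f | mem f}` of all functions. -/
def toSubmodule : Submodule ℝ (S → ℝ) where
  carrier := {f | mem f}
  add_mem' := hI.add_mem
  zero_mem' := hI.zero_mem
  smul_mem' c _ hf := hI.smul_mem c hf

/-- A normed ideal as a seminormed space. A type synonym of `toSubmodule`, so that the seminorm
`nrm` does not clash with the topology of pointwise convergence inherited from `S → ℝ`. -/
def Space : Type _ := hI.toSubmodule

instance : AddCommGroup hI.Space := inferInstanceAs (AddCommGroup hI.toSubmodule)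

instance : Module ℝ hI.Space := inferInstanceAs (Module ℝ hI.toSubmodule)

instance : SeminormedAddCommGroup hI.Space :=
  AddGroupSeminorm.toSeminormedAddCommGroup
    (Seminorm.of (fun f : hI.Space => nrm (f : hI.toSubmodule).1)
      (fun f g => hI.nrm_add_le (f : hI.toSubmodule).2 (g : hI.toSubmodule).2)
      (fun c f => hI.nrm_smul c (f : hI.toSubmodule).2)).toAddGroupSeminorm

instance : NormedSpace ℝ hI.Space where
  norm_smul_le c f := (hI.nrm_smul c (f : hI.toSubmodule).2).le

/-- The vector of `hI.Space` given by a function in the ideal. -/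
def toSpace {f : S → ℝ} (hf : mem f) : hI.Space := (⟨f, hf⟩ : hI.toSubmodule)

end Space

theorem nrm_nonneg (hI : IsNormedIdeal μ mem nrm)
    {f : S → ℝ} (hf : mem f) : 0 ≤ nrm f := norm_nonneg (hI.toSpace hf)

theorem sub_mem (hI : IsNormedIdeal μ mem nrm)
    {f g : S → ℝ} (hf : mem f) (hg : mem g) : mem (f - g) :=
  hI.toSubmodule.sub_mem hf hg

theorem sum_mem (hI : IsNormedIdeal μ mem nrm)
    {ι : Type*} {f : ι → S → ℝ} (hf : ∀ i, mem (f i)) (t : Finset ι) :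
    mem (∑ i ∈ t, f i) :=
  hI.toSubmodule.sum_mem fun i _ => hf i

theorem cesaroMean_mem (hI : IsNormedIdeal μ mem nrm)
    {f : ℕ → S → ℝ} (hf : ∀ n, mem (f n)) (n : ℕ) : mem (cesaroMean f n) :=
  hI.smul_mem _ (hI.sum_mem hf _)

theorem nrm_sum_le (hI : IsNormedIdeal μ mem nrm)
    {ι : Type*} {f : ι → S → ℝ} (hf : ∀ i, mem (f i)) (t : Finset ι) :
    nrm (∑ i ∈ t, f i) ≤ ∑ i ∈ t, nrm (f i) := by
  have toSpace_sum : hI.toSpace (hI.sum_mem hf t) = ∑ i ∈ t, hI.toSpace (hf i) :=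
    Subtype.ext (Submodule.coe_sum hI.toSubmodule (fun i => ⟨f i, hf i⟩) t).symm
  exact (congrArg norm toSpace_sum).trans_le (norm_sum_le _ _)

theorem nrm_cesaroMean_le (hI : IsNormedIdeal μ mem nrm)
    {f : ℕ → S → ℝ} (hf : ∀ n, mem (f n)) {C : ℝ} (hC : ∀ n, nrm (f n) ≤ C)
    (n : ℕ) : nrm (cesaroMean f n) ≤ C := by
  have hC0 : 0 ≤ C := (hI.nrm_nonneg (hf 0)).trans (hC 0)
  calc nrm (cesaroMean f n)
      = (n : ℝ)⁻¹ * nrm (∑ k ∈ Finset.range n, f k) := by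
        rw [cesaroMean, hI.nrm_smul _ (hI.sum_mem hf _), abs_of_nonneg (by positivity)]
    _ ≤ cesaroMean (fun k => nrm (f k)) n :=
        mul_le_mul_of_nonneg_left (hI.nrm_sum_le hf _) (by positivity)
    _ ≤ C := cesaroMean_le hC0 hC n

theorem nrm_congr (hI : IsNormedIdeal μ mem nrm)
    {f g : S → ℝ} (hf : mem f) (hg : mem g) (h : f =ᵐ[μ] g) : nrm f = nrm g :=
  le_antisymm (hI.solid hg (hI.aemeasurable hf) (h.mono fun s hs => by rw [hs])).2
    (hI.solid hf (hI.aemeasurable hg) (h.mono fun s hs => by rw [hs])).2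

theorem nrm_zero (hI : IsNormedIdeal μ mem nrm) : nrm 0 = 0 := norm_zero (E := hI.Space)

theorem mul_solid (hI : IsNormedIdeal μ mem nrm)
    {w f : S → ℝ} (hw : AEMeasurable w μ) (hw1 : ∀ s, |w s| ≤ 1) (hf : mem f) :
    mem (w * f) ∧ nrm (w * f) ≤ nrm f :=
  hI.solid hf (hw.mul (hI.aemeasurable hf)) <| .of_forall fun s => by
    rw [Pi.mul_apply, abs_mul]
    exact mul_le_of_le_one_left (abs_nonneg _) (hw1 s)

theorem indicator_solid (hI : IsNormedIdeal μ mem nrm)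
    {f : S → ℝ} (hf : mem f) {A : Set S} (hA : MeasurableSet A) :
    mem (A.indicator f) ∧ nrm (A.indicator f) ≤ nrm f :=
  hI.solid hf ((hI.aemeasurable hf).indicator hA) <| .of_forall fun s => by
    by_cases hs : s ∈ A <;> simp [hs]

theorem nrm_le_add (hI : IsNormedIdeal μ mem nrm)
    {f g k : S → ℝ} (hf : mem f) (hg : mem g) (hk : AEMeasurable k μ)
    (h : ∀ᵐ s ∂μ, |k s| ≤ |f s| + |g s|) : nrm k ≤ nrm f + nrm g := by
  have abs_solid : ∀ {u : S → ℝ}, mem u → mem |u| ∧ nrm |u| ≤ nrm u := fun hu =>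
    hI.solid hu (hI.aemeasurable hu).abs (.of_forall fun s => (abs_abs _).le)
  have hfg := hI.add_mem (abs_solid hf).1 (abs_solid hg).1
  calc nrm k ≤ nrm (|f| + |g|) := (hI.solid hfg hk (h.mono fun s hs => hs.trans (le_abs_self _))).2
    _ ≤ nrm |f| + nrm |g| := hI.nrm_add_le (abs_solid hf).1 (abs_solid hg).1
    _ ≤ nrm f + nrm g := add_le_add (abs_solid hf).2 (abs_solid hg).2

theorem exists_functional (hI : IsNormedIdeal μ mem nrm) (φ : hI.Space →L[ℝ] ℝ) :
    ∃ T, IsBddLinFunctional mem nrm T ∧ ∀ f (hf : mem f), T f = φ (hI.toSpace hf) := by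
  classical
  let T : (S → ℝ) → ℝ := fun f => if hf : mem f then φ (hI.toSpace hf) else 0
  have hT : ∀ f (hf : mem f), T f = φ (hI.toSpace hf) := fun f hf => dif_pos hf
  refine ⟨T, ⟨fun f g hf hg => ?_, fun c f hf => ?_, ‖φ‖, fun f hf => ?_⟩, hT⟩
  · rw [hT f hf, hT g hg, hT _ (hI.add_mem hf hg)]
    exact map_add φ (hI.toSpace hf) (hI.toSpace hg)
  · rw [hT f hf, hT _ (hI.smul_mem c hf)]
    exact map_smul φ c (hI.toSpace hf)
  · rw [hT f hf]
    exact φ.le_opNorm _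

theorem exists_norming_functional (hI : IsNormedIdeal μ mem nrm) {f : S → ℝ} (hf : mem f) :
    ∃ T, IsBddLinFunctional mem nrm T ∧ (∀ g, mem g → |T g| ≤ nrm g) ∧ T f = nrm f := by
  obtain ⟨φ, hφ, hφf⟩ := exists_dual_vector'' ℝ (hI.toSpace hf)
  obtain ⟨T, hT, hTφ⟩ := hI.exists_functional φ
  refine ⟨T, hT, fun g hg => ?_, (hTφ f hf).trans hφf⟩
  rw [hTφ g hg]
  exact (φ.le_of_opNorm_le hφ (hI.toSpace hg)).trans_eq (one_mul _)

theorem exists_nrm_le_of_weaklyNull (hI : IsNormedIdeal μ mem nrm)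
    {f : ℕ → S → ℝ} (hf : ∀ n, mem (f n))
    (hw : WeaklyNullSeq mem nrm f) : ∃ C, ∀ n, nrm (f n) ≤ C := by
  let eval (n : ℕ) : (hI.Space →L[ℝ] ℝ) →L[ℝ] ℝ := ContinuousLinearMap.apply ℝ ℝ (hI.toSpace (hf n))
  have pointwise_bounded : ∀ φ, ∃ C, ∀ n, ‖eval n φ‖ ≤ C := by
    intro φ
    obtain ⟨T, hT, hTφ⟩ := hI.exists_functional φ
    obtain ⟨C, hC⟩ := (Metric.isBounded_range_of_tendsto _ (hw T hT)).exists_norm_le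
    exact ⟨C, fun n => (congrArg norm (hTφ _ (hf n))).symm.trans_le (hC _ ⟨n, rfl⟩)⟩
  obtain ⟨C, hC⟩ := banach_steinhaus pointwise_bounded
  refine ⟨C, fun n => ?_⟩
  obtain ⟨φ, hφ, hφf⟩ := exists_dual_vector'' ℝ (hI.toSpace (hf n))
  calc nrm (f n) = eval n φ := hφf.symm
    _ ≤ ‖eval n φ‖ := le_abs_self _
    _ ≤ C * ‖φ‖ := (eval n).le_of_opNorm_le (hC n) φ
    _ ≤ C := mul_le_of_le_one_right ((norm_nonneg _).trans (hC n)) hφ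

end IsNormedIdeal

namespace IsBddLinFunctional

variable {T : (S → ℝ) → ℝ}

theorem map_sub (hT : IsBddLinFunctional mem nrm T) (hI : IsNormedIdeal μ mem nrm) {f g : S → ℝ}
    (hf : mem f) (hg : mem g) : T (f - g) = T f - T g := by
  have := hT.1 _ _ (hI.sub_mem hf hg) hg
  rw [sub_add_cancel] at this
  exact eq_sub_of_add_eq this.symm

theorem map_cesaroMean (hT : IsBddLinFunctional mem nrm T) (hI : IsNormedIdeal μ mem nrm)
    {f : ℕ → S → ℝ} (hf : ∀ n, mem (f n)) (n : ℕ) :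
    T (cesaroMean f n) = cesaroMean (fun k => T (f k)) n := by
  have map_sum : ∀ m, T (∑ k ∈ Finset.range m, f k) = ∑ k ∈ Finset.range m, T (f k) := by
    intro m
    induction m with
    | zero => simpa using hT.2.1 0 0 hI.zero_mem
    | succ m ih => rw [Finset.sum_range_succ, hT.1 _ _ (hI.sum_mem hf _) (hf m), ih,
        Finset.sum_range_succ]
  rw [cesaroMean, hT.2.1 _ _ (hI.sum_mem hf _), map_sum, cesaroMean, smul_eq_mul]

theorem map_congr (hT : IsBddLinFunctional mem nrm T) (hI : IsNormedIdeal μ mem nrm) {f g : S → ℝ}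
    (hf : mem f) (hg : mem g) (h : f =ᵐ[μ] g) : T f = T g := by
  have nrm_sub : nrm (f - g) = 0 :=
    (hI.nrm_congr (hI.sub_mem hf hg) hI.zero_mem (h.sub_eq)).trans hI.nrm_zero
  obtain ⟨C, hC⟩ := hT.2.2
  have := hC _ (hI.sub_mem hf hg)
  rw [nrm_sub, mul_zero] at this
  rw [← sub_eq_zero, ← hT.map_sub hI hf hg]
  exact abs_nonpos_iff.1 this

theorem comp_mul (hT : IsBddLinFunctional mem nrm T) (hI : IsNormedIdeal μ mem nrm) {w : S → ℝ}
    (hw : AEMeasurable w μ) (hw1 : ∀ s, |w s| ≤ 1) :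
    IsBddLinFunctional mem nrm fun f => T (w * f) := by
  refine ⟨fun f g hf hg => ?_, fun c f hf => ?_, ?_⟩
  · simp only [mul_add]
    exact hT.1 _ _ (hI.mul_solid hw hw1 hf).1 (hI.mul_solid hw hw1 hg).1
  · simp only [mul_smul_comm]
    exact hT.2.1 _ _ (hI.mul_solid hw hw1 hf).1
  · obtain ⟨C, hC⟩ := hT.2.2
    refine ⟨|C|, fun f hf => ?_⟩
    obtain ⟨mem_mul, nrm_mul_le⟩ := hI.mul_solid hw hw1 hf
    exact (hC _ mem_mul).trans
      (mul_le_mul (le_abs_self C) nrm_mul_le (hI.nrm_nonneg mem_mul) (abs_nonneg C))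

end IsBddLinFunctional

namespace WeaklyNullSeq

variable {f : ℕ → S → ℝ}

theorem cesaroMean (hw : WeaklyNullSeq mem nrm f) (hI : IsNormedIdeal μ mem nrm)
    (hf : ∀ n, mem (f n)) : WeaklyNullSeq mem nrm (cesaroMean f) := fun T hT =>
  (hw T hT).cesaro.congr fun n => (hT.map_cesaroMean hI hf n).symm

theorem nrm_le_of_eventually_nrm_sub_le (hw : WeaklyNullSeq mem nrm f)
    (hI : IsNormedIdeal μ mem nrm) (hf : ∀ n, mem (f n)) {G : S → ℝ} (hG : mem G) {ε : ℝ}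
    (h : ∀ᶠ n in atTop, nrm (f n - G) ≤ ε) : nrm G ≤ ε := by
  obtain ⟨T, hT, hT_le, hTG⟩ := hI.exists_norming_functional hG
  have hlim : Tendsto (fun n => |T (f n - G)|) atTop (𝓝 (nrm G)) := by
    have := ((hw T hT).sub_const (T G)).abs
    rw [zero_sub, abs_neg, hTG, abs_of_nonneg (hI.nrm_nonneg hG)] at this
    exact this.congr fun n => by rw [hT.map_sub hI (hf n) hG, hTG]
  exact le_of_tendsto hlim (h.mono fun n hn => (hT_le _ (hI.sub_mem (hf n) hG)).trans hn)

end WeaklyNullSeq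

/-! ### Truncation in order continuous ideals -/

open ProbabilityTheory (truncation abs_truncation_le_bound abs_truncation_le_abs_self
  truncation_eq_self)

section Truncation

variable {α : Type*} (f : α → ℝ)

theorem truncation_eq_self_or_eq_zero (A : ℝ) (s : α) :
    truncation f A s = f s ∨ truncation f A s = 0 := by
  simp only [truncation, Function.comp_apply]
  exact (Set.indicator_eq_zero_or_self _ _ _).symm

theorem abs_sub_truncation_le (A : ℝ) (s : α) : |f s - truncation f A s| ≤ |f s| := by
  rcases truncation_eq_self_or_eq_zero f A s with h | h <;> simp [h]

theorem truncation_eq_self_of_le {A A' : ℝ} (hA : A ≤ A') {s : α} (h : truncation f A s ≠ 0) :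
    truncation f A' s = f s := by
  simp only [truncation, Function.comp_apply] at h ⊢
  exact Set.indicator_of_mem
    (Set.Ioc_subset_Ioc (neg_le_neg hA) hA (Set.mem_of_indicator_ne_zero h)) id

theorem abs_truncation_add_abs_sub {A A' : ℝ} (hA : A ≤ A') (s : α) :
    |truncation f A s| + |truncation f A' s - truncation f A s| = |truncation f A' s| := by
  by_cases h : truncation f A s = 0
  · simp [h]
  · rw [truncation_eq_self_of_le f hA h, (truncation_eq_self_or_eq_zero f A s).resolve_right h]
    simp

theorem abs_sub_truncation_anti {A A' : ℝ} (hA : A ≤ A') (s : α) :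
    |f s - truncation f A' s| ≤ |f s - truncation f A s| := by
  by_cases h : truncation f A s = 0
  · simpa [h] using abs_sub_truncation_le f A' s
  · simp [truncation_eq_self_of_le f hA h]

theorem eventually_truncation_eq_self (s : α) :
    ∀ᶠ M : ℕ in atTop, truncation f M s = f s :=
  (tendsto_natCast_atTop_atTop.eventually_gt_atTop |f s|).mono fun _ => truncation_eq_self

end Truncation

theorem aemeasurable_truncation {f : S → ℝ} (hf : AEMeasurable f μ) (A : ℝ) :
    AEMeasurable (truncation f A) μ :=
  hf.aestronglyMeasurable.truncation.aemeasurable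

/-- A normed ideal containing the constants, with order continuous seminorm: dominated a.e.
convergence implies convergence. -/
structure IsOrderContinuousIdeal (μ : Measure S) (mem : (S → ℝ) → Prop) (nrm : (S → ℝ) → ℝ) : Prop
    extends IsNormedIdeal μ mem nrm where
  one_mem : mem 1
  tendsto_of_dominated : ∀ {F : S → ℝ} {f : ℕ → S → ℝ}, mem F → (∀ n, AEMeasurable (f n) μ) →
    (∀ n, ∀ᵐ s ∂μ, |f n s| ≤ |F s|) → (∀ᵐ s ∂μ, Tendsto (fun n => f n s) atTop (𝓝 0)) →
    Tendsto (fun n => nrm (f n)) atTop (𝓝 0)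

/-- The functions `g n` are, up to arbitrarily small norm, uniformly bounded. -/
def AlmostBounded (nrm : (S → ℝ) → ℝ) (g : ℕ → S → ℝ) : Prop :=
  ∀ ε > 0, ∃ M : ℕ, ∀ n, nrm (g n - truncation (g n) M) ≤ ε

namespace IsNormedIdeal

theorem truncation_mem (hI : IsNormedIdeal μ mem nrm) {f : S → ℝ} (hf : mem f) (A : ℝ) :
    mem (truncation f A) :=
  (hI.solid hf (aemeasurable_truncation (hI.aemeasurable hf) A)
    (.of_forall fun s => abs_truncation_le_abs_self f A s)).1

theorem sub_truncation_mem (hI : IsNormedIdeal μ mem nrm) {f : S → ℝ} (hf : mem f) (A : ℝ) :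
    mem (f - truncation f A) :=
  hI.sub_mem hf (hI.truncation_mem hf A)

theorem nrm_indicator_union_le (hI : IsNormedIdeal μ mem nrm) {f : S → ℝ} (hf : mem f)
    {A A' : Set S} (hA : MeasurableSet A) (hA' : MeasurableSet A') :
    nrm ((A ∪ A').indicator f) ≤ nrm (A.indicator f) + nrm (A'.indicator f) :=
  hI.nrm_le_add (hI.indicator_solid hf hA).1 (hI.indicator_solid hf hA').1
    ((hI.aemeasurable hf).indicator (hA.union hA')) <| .of_forall fun s => by
      by_cases hs : s ∈ A <;> by_cases hs' : s ∈ A' <;> simp [hs, hs']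

theorem nrm_indicator_biUnion_lt_le (hI : IsNormedIdeal μ mem nrm) {f : S → ℝ} (hf : mem f)
    {E : ℕ → Set S} (hE : ∀ n, MeasurableSet (E n)) (N : ℕ) :
    nrm ((⋃ n < N, E n).indicator f) ≤ ∑ n ∈ Finset.range N, nrm ((E n).indicator f) := by
  induction N with
  | zero => simpa [Pi.zero_def] using hI.nrm_zero.le
  | succ N ih =>
    rw [Set.biUnion_lt_succ, Finset.sum_range_succ]
    have hU : MeasurableSet (⋃ n < N, E n) := .biUnion (Set.to_countable _) fun n _ => hE n
    exact (hI.nrm_indicator_union_le hf hU (hE N)).trans (add_le_add_left ih _)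

theorem mul_nrm_indicator_one_le (hI : IsNormedIdeal μ mem nrm) {f : S → ℝ} (hf : mem f)
    (h1 : mem 1) {E : Set S} (hE : MeasurableSet E) {c : ℝ} (hc : 0 ≤ c)
    (h : ∀ᵐ s ∂μ, s ∈ E → c ≤ |f s|) : c * nrm (E.indicator 1) ≤ nrm f := by
  have mem_one := (hI.indicator_solid h1 hE).1
  rw [← abs_of_nonneg hc, ← hI.nrm_smul c mem_one]
  refine (hI.solid hf (hI.aemeasurable (hI.smul_mem c mem_one)) ?_).2
  filter_upwards [h] with s hs
  by_cases hsE : s ∈ E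
  · simpa [hsE, abs_of_nonneg hc] using hs hsE
  · simp [hsE]

theorem nrm_indicator_le_mul_add (hI : IsNormedIdeal μ mem nrm) {f : S → ℝ} (hf : mem f)
    (h1 : mem 1) {E : Set S} (hE : MeasurableSet E) (M : ℕ) :
    nrm (E.indicator f) ≤ M * nrm (E.indicator 1) + nrm (f - truncation f M) := by
  have mem_one := (hI.indicator_solid h1 hE).1
  calc nrm (E.indicator f)
      ≤ nrm ((M : ℝ) • E.indicator 1) + nrm (f - truncation f M) := by
        refine hI.nrm_le_add (hI.smul_mem _ mem_one) (hI.sub_truncation_mem hf M)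
          ((hI.aemeasurable hf).indicator hE) (.of_forall fun s => ?_)
        by_cases hs : s ∈ E
        · have := abs_truncation_le_bound f M s
          have := abs_sub_abs_le_abs_sub (f s) (truncation f M s)
          simp only [Set.indicator_of_mem hs, Pi.smul_apply, Pi.one_apply, Pi.sub_apply,
            smul_eq_mul, mul_one]
          linarith
        · simp [hs]
    _ = M * nrm (E.indicator 1) + nrm (f - truncation f M) := by
        rw [hI.nrm_smul _ mem_one, Nat.abs_cast]

end IsNormedIdeal

namespace IsOrderContinuousIdeal

theorem mem_of_bounded (hI : IsOrderContinuousIdeal μ mem nrm) {f : S → ℝ} (hf : AEMeasurable f μ)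
    {M : ℝ} (hM : ∀ᵐ s ∂μ, |f s| ≤ M) : mem f :=
  (hI.solid (hI.smul_mem M hI.one_mem) hf
    (hM.mono fun s hs => by simpa using hs.trans (le_abs_self M))).1

theorem tendsto_nrm_indicator_of_eventually_notMem (hI : IsOrderContinuousIdeal μ mem nrm)
    {f : S → ℝ} (hf : mem f) {A : ℕ → Set S} (hA : ∀ n, MeasurableSet (A n))
    (h : ∀ᵐ s ∂μ, ∀ᶠ n in atTop, s ∉ A n) :
    Tendsto (fun n => nrm ((A n).indicator f)) atTop (𝓝 0) :=
  hI.tendsto_of_dominated hf (fun n => (hI.aemeasurable hf).indicator (hA n))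
    (fun n => .of_forall fun s => by by_cases hs : s ∈ A n <;> simp [hs])
    (h.mono fun _ hs =>
      tendsto_const_nhds.congr' (hs.mono fun _ hn => (Set.indicator_of_notMem hn f).symm))

theorem unifACNorm_singleton (hI : IsOrderContinuousIdeal μ mem nrm) {f : S → ℝ} (hf : mem f) :
    UnifACNorm μ nrm {f} := by
  intro ε hε
  by_contra! hcon
  choose A hA hμA hA_nrm using fun n : ℕ => hcon ((1 / 2) ^ n) (by positivity)
  have hsum : ∑' n, μ (A n) ≠ ∞ :=
    ne_top_of_le_ne_top summable_geometric_two.tsum_ofReal_ne_top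
      (ENNReal.tsum_le_tsum fun n => (hμA n).le)
  have hlim := hI.tendsto_nrm_indicator_of_eventually_notMem hf hA (ae_eventually_notMem hsum)
  obtain ⟨n, hn⟩ := (hlim.eventually_lt_const hε).exists
  obtain ⟨_, rfl, hn'⟩ := hA_nrm n
  exact lt_asymm hn hn'

theorem tendsto_nrm_sub_truncation (hI : IsOrderContinuousIdeal μ mem nrm) {f : S → ℝ}
    (hf : mem f) : Tendsto (fun M : ℕ => nrm (f - truncation f M)) atTop (𝓝 0) :=
  hI.tendsto_of_dominated hf (fun M => hI.aemeasurable (hI.sub_truncation_mem hf M))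
    (fun M => .of_forall fun s => abs_sub_truncation_le f M s)
    (.of_forall fun s => tendsto_const_nhds.congr'
      ((eventually_truncation_eq_self f s).mono fun M hM => by simp [hM]))

theorem tendsto_nrm_indicator_zero (hI : IsOrderContinuousIdeal μ mem nrm) {f : S → ℝ} (hf : mem f)
    {E : ℕ → Set S} (hE : ∀ n, MeasurableSet (E n))
    (h : Tendsto (fun n => nrm ((E n).indicator 1)) atTop (𝓝 0)) :
    Tendsto (fun n => nrm ((E n).indicator f)) atTop (𝓝 0) := by
  refine tendsto_order.2 ⟨fun a ha => .of_forall fun n =>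
    ha.trans_le (hI.nrm_nonneg (hI.indicator_solid hf (hE n)).1), fun ε hε => ?_⟩
  obtain ⟨M, hM⟩ :=
    ((hI.tendsto_nrm_sub_truncation hf).eventually_lt_const (half_pos hε)).exists
  have hlim : Tendsto (fun n => M * nrm ((E n).indicator 1)) atTop (𝓝 0) := by
    simpa using h.const_mul (M : ℝ)
  filter_upwards [hlim.eventually_lt_const (half_pos hε)] with n hn
  linarith [hI.nrm_indicator_le_mul_add hf hI.one_mem (hE n) M]

theorem nrm_indicator_iUnion_le (hI : IsOrderContinuousIdeal μ mem nrm) {f : S → ℝ} (hf : mem f)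
    {E : ℕ → Set S} (hE : ∀ n, MeasurableSet (E n)) {c : ℕ → ℝ} {a : ℝ} (hc : HasSum c a)
    (h : ∀ n, nrm ((E n).indicator f) ≤ c n) : nrm ((⋃ n, E n).indicator f) ≤ a := by
  let U (N : ℕ) : Set S := ⋃ n < N, E n
  have hU : ∀ N, MeasurableSet (U N) := fun N => .biUnion (Set.to_countable _) fun n _ => hE n
  have hV : ∀ N, MeasurableSet ((⋃ n, E n) \ U N) := fun N => (MeasurableSet.iUnion hE).diff (hU N)
  have hc0 : ∀ n, 0 ≤ c n := fun n =>
    (hI.nrm_nonneg (hI.indicator_solid hf (hE n)).1).trans (h n)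
  have nrm_tail : Tendsto (fun N => nrm (((⋃ n, E n) \ U N).indicator f)) atTop (𝓝 0) := by
    refine hI.tendsto_nrm_indicator_of_eventually_notMem hf hV (.of_forall fun s => ?_)
    by_cases hs : s ∈ ⋃ n, E n
    · obtain ⟨n, hn⟩ := Set.mem_iUnion.1 hs
      exact (eventually_gt_atTop n).mono fun N hN hV => hV.2 (Set.mem_biUnion hN hn)
    · exact .of_forall fun N hV => hs hV.1
  have nrm_le : ∀ N, nrm ((⋃ n, E n).indicator f) ≤ a + nrm (((⋃ n, E n) \ U N).indicator f) := by
    intro N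
    have U_subset : U N ⊆ ⋃ n, E n := Set.iUnion₂_subset fun n _ => Set.subset_iUnion E n
    calc nrm ((⋃ n, E n).indicator f)
        ≤ nrm ((U N).indicator f) + nrm (((⋃ n, E n) \ U N).indicator f) := by
          rw [← Set.union_sdiff_cancel U_subset]
          simpa using hI.nrm_indicator_union_le hf (hU N) (hV N)
      _ ≤ a + nrm (((⋃ n, E n) \ U N).indicator f) := by
          gcongr
          exact (hI.nrm_indicator_biUnion_lt_le hf hE N).trans <|
            (Finset.sum_le_sum fun n _ => h n).trans (sum_le_hasSum _ (fun n _ => hc0 n) hc)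
  simpa using ge_of_tendsto' (nrm_tail.const_add a) nrm_le

end IsOrderContinuousIdeal

/-! ### Splitting sequences -/

theorem AlmostBounded.unifACNorm {g : ℕ → S → ℝ} (hgb : AlmostBounded nrm g)
    (hI : IsOrderContinuousIdeal μ mem nrm) (hg : ∀ n, mem (g n)) :
    UnifACNorm μ nrm (Set.range g) := by
  intro ε hε
  obtain ⟨M, hM⟩ := hgb (ε / 2) (half_pos hε)
  obtain ⟨δ, hδ, hδ_le⟩ := hI.unifACNorm_singleton hI.one_mem (ε / (2 * (M + 1))) (by positivity)
  refine ⟨δ, hδ, fun A hA hμA => ?_⟩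
  rintro - ⟨n, rfl⟩
  calc nrm (A.indicator (g n))
      ≤ M * nrm (A.indicator 1) + nrm (g n - truncation (g n) M) :=
        hI.nrm_indicator_le_mul_add (hg n) hI.one_mem hA M
    _ ≤ (M + 1) * (ε / (2 * (M + 1))) + ε / 2 := by
        gcongr
        · exact hI.nrm_nonneg (hI.indicator_solid hI.one_mem hA).1
        · linarith
        · exact hδ_le A hA hμA 1 rfl
        · exact hM n
    _ = ε := by field_simp; norm_num

theorem almostBounded_of_eventually (hI : IsOrderContinuousIdeal μ mem nrm) {g : ℕ → S → ℝ}
    (hg : ∀ n, mem (g n))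
    (h : ∀ ε > 0, ∃ M : ℕ, ∀ᶠ n in atTop, nrm (g n - truncation (g n) M) ≤ ε) :
    AlmostBounded nrm g := by
  intro ε hε
  obtain ⟨M, hM⟩ := h ε hε
  obtain ⟨N, hN⟩ := eventually_atTop.1 hM
  obtain ⟨M', hMM', hM'⟩ := ((eventually_ge_atTop M).and <|
    (eventually_all_finite (Set.finite_Iio N)).2 fun n _ =>
      (hI.tendsto_nrm_sub_truncation (hg n)).eventually_le_const hε).exists
  refine ⟨M', fun n => ?_⟩
  rcases lt_or_ge n N with hn | hn
  · exact hM' n hn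
  · exact (hI.solid (hI.sub_truncation_mem (hg n) M)
      (hI.aemeasurable (hI.sub_truncation_mem (hg n) M'))
      (.of_forall fun s => abs_sub_truncation_anti (g n) (Nat.cast_le.2 hMM') s)).2.trans (hN n hn)

theorem exists_measurableSet_ae_mem_iff {f : S → ℝ} (hf : AEMeasurable f μ) {A : Set ℝ}
    (hA : MeasurableSet A) : ∃ E, MeasurableSet E ∧ ∀ᵐ s ∂μ, s ∈ E ↔ f s ∈ A :=
  ⟨hf.mk f ⁻¹' A, hf.measurable_mk hA, hf.ae_eq_mk.mono fun s hs => by rw [Set.mem_preimage, hs]⟩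

theorem exists_subseq_nrm_indicator_tail_le (hI : IsOrderContinuousIdeal μ mem nrm)
    {f : ℕ → S → ℝ} (hf : ∀ n, mem (f n)) {E : ℕ → Set S} (hE : ∀ n, MeasurableSet (E n))
    (h : Tendsto (fun n => nrm ((E n).indicator 1)) atTop (𝓝 0)) :
    ∃ τ : ℕ → ℕ, StrictMono τ ∧
      ∀ j, nrm ((⋃ n, E (τ (n + (j + 1)))).indicator (f (τ j))) ≤ (1 / 2) ^ j := by
  obtain ⟨τ, hτ, hτ_le⟩ := exists_strictMono_forall_lt
    (P := fun m i n => nrm ((E n).indicator (f i)) ≤ (1 / 2) ^ m) fun m i =>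
      (hI.tendsto_nrm_indicator_zero (hf i) hE h).eventually_le_const (by positivity)
  refine ⟨τ, hτ, fun j => hI.nrm_indicator_iUnion_le (hf _) (fun n => hE _)
    (hasSum_geometric_two' _) fun n => (hτ_le j (n + (j + 1)) (by omega)).trans_eq ?_⟩
  rw [pow_add, pow_succ, one_div_pow 2 n]
  ring

/-- `f n = g n + h n` is a splitting as in the subsequence splitting property, except that the
uniform absolute continuity of `g` is replaced by the stronger `AlmostBounded`. -/
structure IsSplitting (μ : Measure S) (mem : (S → ℝ) → Prop) (nrm : (S → ℝ) → ℝ)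
    (f g h : ℕ → S → ℝ) : Prop where
  mem_left : ∀ n, mem (g n)
  mem_right : ∀ n, mem (h n)
  eq_add : ∀ n, f n = g n + h n
  disjoint : ∀ n, (fun s => g n s * h n s) =ᵐ[μ] 0
  almostBounded : AlmostBounded nrm g
  pairwise_disjoint : ∀ i j, i ≠ j → (fun s => h i s * h j s) =ᵐ[μ] 0

theorem tendsto_nrm_indicator_one_zero (hI : IsOrderContinuousIdeal μ mem nrm) {f : ℕ → S → ℝ}
    (hf : ∀ n, mem (f n)) {C : ℝ} (hC : ∀ n, nrm (f n) ≤ C) {E : ℕ → Set S}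
    (hE : ∀ n, MeasurableSet (E n)) (h : ∀ n : ℕ, ∀ᵐ s ∂μ, s ∈ E n → n ≤ |f n s|) :
    Tendsto (fun n => nrm ((E n).indicator 1)) atTop (𝓝 0) := by
  refine squeeze_zero' (.of_forall fun n =>
    hI.nrm_nonneg (hI.indicator_solid hI.one_mem (hE n)).1) ?_
    (tendsto_const_div_atTop_nhds_zero_nat C)
  filter_upwards [eventually_gt_atTop 0] with n hn
  rw [le_div_iff₀' (Nat.cast_pos.2 hn)]
  exact (hI.mul_nrm_indicator_one_le (hf n) hI.one_mem (hE n) n.cast_nonneg (h n)).trans (hC n)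

theorem nrm_sub_truncation_indicator_le (hI : IsNormedIdeal μ mem nrm) {f : S → ℝ} (hf : mem f)
    {E F : Set S} (hE : MeasurableSet E) (hF : MeasurableSet F) {k : ℝ}
    (h : ∀ᵐ s ∂μ, s ∈ E ↔ k ≤ |f s|) (M : ℝ) :
    nrm ((E \ F)ᶜ.indicator f - truncation ((E \ F)ᶜ.indicator f) M) ≤
      nrm (truncation f k - truncation f M) + nrm (F.indicator f) := by
  have mem_ind := (hI.indicator_solid hf (hE.diff hF).compl).1
  refine hI.nrm_le_add (hI.sub_mem (hI.truncation_mem hf k) (hI.truncation_mem hf M))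
    (hI.indicator_solid hf hF).1 (hI.aemeasurable (hI.sub_truncation_mem mem_ind M)) ?_
  filter_upwards [h] with s hs
  have abs_le := abs_sub_truncation_le ((E \ F)ᶜ.indicator f) M s
  by_cases hFs : s ∈ F
  · have hEFs : s ∈ (E \ F)ᶜ := fun h => h.2 hFs
    rw [Set.indicator_of_mem hEFs] at abs_le
    simp only [Pi.sub_apply, Set.indicator_of_mem hEFs, Set.indicator_of_mem hFs]
    exact abs_le.trans (le_add_of_nonneg_left (abs_nonneg _))
  by_cases hEs : s ∈ E
  · have hEFs : s ∉ (E \ F)ᶜ := fun h => h ⟨hEs, hFs⟩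
    rw [Set.indicator_of_notMem hEFs, abs_zero] at abs_le
    simp only [Pi.sub_apply, Set.indicator_of_notMem hEFs]
    exact abs_le.trans (by positivity)
  · have hEFs : s ∈ (E \ F)ᶜ := fun h => hEs h.1
    have trunc_eq : truncation ((E \ F)ᶜ.indicator f) M s = truncation f M s := by
      simp only [truncation, Function.comp_apply, Set.indicator_of_mem hEFs]
    rw [Pi.sub_apply, Pi.sub_apply, trunc_eq, Set.indicator_of_mem hEFs,
      truncation_eq_self (lt_of_not_ge (mt hs.2 hEs)), Set.indicator_of_notMem hFs, abs_zero,
      add_zero]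

theorem pairwise_disjoint_diff_iUnion {α : Type*} (E : ℕ → Set α) :
    Pairwise (Function.onFun Disjoint fun j => E j \ ⋃ n, E (n + (j + 1))) := by
  refine (pairwise_disjoint_on _).2 fun i j hij => ?_
  refine Set.disjoint_left.2 fun s hi hj => hi.2 (Set.mem_iUnion.2 ⟨j - (i + 1), ?_⟩)
  rw [Nat.sub_add_cancel hij]
  exact hj.1

theorem exists_isSplitting (hI : IsOrderContinuousIdeal μ mem nrm) {f : ℕ → S → ℝ}
    (hf : ∀ n, mem (f n)) {C : ℝ} (hC : ∀ n, nrm (f n) ≤ C)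
    (htr : ∀ ε > 0, ∃ M : ℕ, ∀ k ≥ M, nrm (truncation (f k) k - truncation (f k) M) ≤ ε) :
    ∃ τ : ℕ → ℕ, StrictMono τ ∧ ∃ g h, IsSplitting μ mem nrm (fun n => f (τ n)) g h := by
  choose E hE hE_iff using fun n : ℕ => exists_measurableSet_ae_mem_iff
    (hI.aemeasurable (hf n)) (measurableSet_le measurable_const measurable_id.abs :
      MeasurableSet {t : ℝ | n ≤ |t|})
  obtain ⟨τ, hτ, nrm_tail⟩ := exists_subseq_nrm_indicator_tail_le hI hf hE
    (tendsto_nrm_indicator_one_zero hI hf hC hE fun n => (hE_iff n).mono fun s hs => hs.1)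
  let F (j : ℕ) : Set S := ⋃ n, E (τ (n + (j + 1)))
  have hF : ∀ j, MeasurableSet (F j) := fun j => .iUnion fun n => hE _
  have hEF : ∀ j, MeasurableSet (E (τ j) \ F j) := fun j => (hE _).diff (hF j)
  have mem_g : ∀ j, mem ((E (τ j) \ F j)ᶜ.indicator (f (τ j))) := fun j =>
    (hI.indicator_solid (hf _) (hEF j).compl).1
  refine ⟨τ, hτ, fun j => (E (τ j) \ F j)ᶜ.indicator (f (τ j)),
    fun j => (E (τ j) \ F j).indicator (f (τ j)), mem_g,
    fun j => (hI.indicator_solid (hf _) (hEF j)).1,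
    fun j => (Set.indicator_compl_add_self _ _).symm, fun j => .of_forall fun s => ?_, ?_, ?_⟩
  · by_cases hs : s ∈ E (τ j) \ F j <;> simp [hs]
  · refine almostBounded_of_eventually hI mem_g fun ε hε => ?_
    obtain ⟨M, hM⟩ := htr (ε / 2) (half_pos hε)
    have pow_lim := tendsto_pow_atTop_nhds_zero_of_lt_one (r := (1 / 2 : ℝ)) (by norm_num)
      (by norm_num)
    refine ⟨M, ?_⟩
    filter_upwards [pow_lim.eventually_le_const (half_pos hε), eventually_ge_atTop M] with j hj hMj
    refine (nrm_sub_truncation_indicator_le hI.toIsNormedIdeal (hf _) (hE _) (hF j)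
      (hE_iff (τ j)) M).trans ?_
    linarith [hM (τ j) (hMj.trans (hτ.id_le j)), nrm_tail j]
  · intro i j hij
    refine .of_forall fun s => ?_
    have hd := pairwise_disjoint_diff_iUnion (fun j => E (τ j)) hij
    by_cases hs : s ∈ E (τ i) \ F i
    · simp [F, Set.disjoint_left.1 hd hs]
    · simp [hs]

/-! ### Weakly null sequences -/

theorem tendsto_measure_iUnion_add [IsFiniteMeasure μ] {E : ℕ → Set S}
    (hE : ∀ n, MeasurableSet (E n)) (hd : Pairwise (Function.onFun (AEDisjoint μ) E)) :
    Tendsto (fun N => μ (⋃ n, E (n + N))) atTop (𝓝 0) := by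
  have tsum_ne_top : ∑' n, μ (E n) ≠ ⊤ := by
    rw [← measure_iUnion₀ hd fun n => (hE n).nullMeasurableSet]
    exact measure_ne_top _ _
  exact tendsto_of_tendsto_of_tendsto_of_le_of_le tendsto_const_nhds
    (ENNReal.tendsto_sum_nat_add _ tsum_ne_top) (fun _ => bot_le) fun N => measure_iUnion_le _

theorem exists_indicator_eq_of_pairwise_disjoint [IsFiniteMeasure μ] {h : ℕ → S → ℝ}
    (hh : ∀ n, AEMeasurable (h n) μ)
    (hd : ∀ i j, i ≠ j → (fun s => h i s * h j s) =ᵐ[μ] 0) {ε : ℝ≥0∞} (hε : 0 < ε) :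
    ∃ P, MeasurableSet P ∧ μ P < ε ∧ ∀ᶠ n in atTop, P.indicator (h n) =ᵐ[μ] h n := by
  choose E hE hE_iff using fun n =>
    exists_measurableSet_ae_mem_iff (hh n) (MeasurableSet.singleton (0 : ℝ)).compl
  have hEd : Pairwise (Function.onFun (AEDisjoint μ) E) := by
    refine fun i j hij => measure_eq_zero_iff_ae_notMem.2 ?_
    filter_upwards [hd i j hij, hE_iff i, hE_iff j] with s hs hi hj hsE
    exact mul_ne_zero (hi.1 hsE.1) (hj.1 hsE.2) hs
  obtain ⟨N, hN⟩ := ((tendsto_measure_iUnion_add hE hEd).eventually_lt_const hε).exists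
  refine ⟨_, .iUnion fun n => hE (n + N), hN, ?_⟩
  filter_upwards [eventually_ge_atTop N] with n hn
  filter_upwards [hE_iff n] with s hs
  refine Set.indicator_apply_eq_self.2 fun hsP => of_not_not fun hne => hsP ?_
  exact Set.mem_iUnion.2 ⟨n - N, by rw [Nat.sub_add_cancel hn]; exact hs.2 hne⟩

theorem IsSplitting.weaklyNullSeq_right [IsFiniteMeasure μ] {f g h : ℕ → S → ℝ}
    (hs : IsSplitting μ mem nrm f g h) (hI : IsOrderContinuousIdeal μ mem nrm)
    (hw : WeaklyNullSeq mem nrm f) : WeaklyNullSeq mem nrm h := by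
  intro T hT
  obtain ⟨C, hC⟩ := hT.2.2
  refine Metric.tendsto_nhds.2 fun ε hε => ?_
  obtain ⟨δ, hδ, nrm_g_le⟩ := hs.almostBounded.unifACNorm hI hs.mem_left
    (ε / (2 * (|C| + 1))) (by positivity)
  obtain ⟨P, hP, hμP, hPh⟩ := exists_indicator_eq_of_pairwise_disjoint
    (fun n => hI.aemeasurable (hs.mem_right n)) hs.pairwise_disjoint (ENNReal.ofReal_pos.2 hδ)
  have mem_ind {k : S → ℝ} (hk : mem k) : mem (P.indicator k) := (hI.indicator_solid hk hP).1
  have Tf_lim : Tendsto (fun n => T (P.indicator (f n))) atTop (𝓝 0) := by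
    have hTP := hT.comp_mul hI.toIsNormedIdeal (w := P.indicator 1)
      (aemeasurable_one.indicator hP) fun s => by by_cases hs : s ∈ P <;> simp [hs]
    refine (hw _ hTP).congr fun n => congrArg T (funext fun s => ?_)
    by_cases hs : s ∈ P <;> simp [hs]
  have Tg_le (n : ℕ) : |T (P.indicator (g n))| ≤ ε / 2 := by
    have nrm_nonneg := hI.nrm_nonneg (mem_ind (hs.mem_left n))
    calc |T (P.indicator (g n))| ≤ C * nrm (P.indicator (g n)) := hC _ (mem_ind (hs.mem_left n))
      _ ≤ (|C| + 1) * (ε / (2 * (|C| + 1))) := by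
          gcongr
          · linarith [le_abs_self C]
          · exact nrm_g_le P hP hμP _ ⟨n, rfl⟩
      _ = ε / 2 := by field_simp
  filter_upwards [Metric.tendsto_nhds.1 Tf_lim _ (half_pos hε), hPh] with n hfn hhn
  have T_add : T (P.indicator (f n)) = T (P.indicator (g n)) + T (h n) := by
    rw [hs.eq_add, Set.indicator_add', hT.1 _ _ (mem_ind (hs.mem_left n))
      (mem_ind (hs.mem_right n)), hT.map_congr hI.toIsNormedIdeal _ (hs.mem_right n) hhn]
    exact mem_ind (hs.mem_right n)
  rw [Real.dist_0_eq_abs] at hfn ⊢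
  rw [eq_sub_of_add_eq' T_add.symm]
  linarith [abs_sub (T (P.indicator (f n))) (T (P.indicator (g n))), Tg_le n]

theorem IsSplitting.weaklyNullSeq_left [IsFiniteMeasure μ] {f g h : ℕ → S → ℝ}
    (hs : IsSplitting μ mem nrm f g h) (hI : IsOrderContinuousIdeal μ mem nrm)
    (hw : WeaklyNullSeq mem nrm f) : WeaklyNullSeq mem nrm g := by
  intro T hT
  have lim_sub := (hw T hT).sub (hs.weaklyNullSeq_right hI hw T hT)
  rw [sub_zero] at lim_sub
  refine lim_sub.congr fun n => ?_
  rw [hs.eq_add, hT.1 _ _ (hs.mem_left n) (hs.mem_right n), add_sub_cancel_right]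

theorem exists_mul_eq_abs_of_pairwise_disjoint {h : ℕ → S → ℝ} (hh : ∀ n, AEMeasurable (h n) μ)
    (hd : ∀ i j, i ≠ j → (fun s => h i s * h j s) =ᵐ[μ] 0) :
    ∃ w : S → ℝ, Measurable w ∧ (∀ s, |w s| ≤ 1) ∧ ∀ n, w * h n =ᵐ[μ] fun s => |h n s| := by
  classical
  choose E hE hE_iff using fun n =>
    exists_measurableSet_ae_mem_iff (hh n) (measurableSet_Ioi (a := 0))
  refine ⟨(⋃ n, E n).piecewise 1 (-1), .piecewise (.iUnion hE) measurable_one measurable_one.neg,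
    fun s => ?_, fun n => ?_⟩
  · by_cases hs : s ∈ ⋃ n, E n <;> simp [Set.piecewise, hs]
  · filter_upwards [ae_all_iff.2 hE_iff, ae_all_iff.2 fun j => ae_all_iff.2 fun hj => hd j n hj]
      with s hs hds
    by_cases hsE : s ∈ ⋃ n, E n
    · obtain ⟨j, hj⟩ := Set.mem_iUnion.1 hsE
      have h_nonneg : 0 ≤ h n s := by
        rcases eq_or_ne j n with rfl | hjn
        · exact ((hs j).1 hj).le
        · exact ((mul_eq_zero.1 (hds j hjn)).resolve_left ((hs j).1 hj).ne').ge
      rw [Pi.mul_apply, Set.piecewise_eq_of_mem _ _ _ hsE, Pi.one_apply, one_mul,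
        abs_of_nonneg h_nonneg]
    · have h_nonpos : h n s ≤ 0 :=
        le_of_not_gt fun hpos => hsE (Set.mem_iUnion.2 ⟨n, (hs n).2 hpos⟩)
      rw [Pi.mul_apply, Set.piecewise_eq_of_notMem _ _ _ hsE, Pi.neg_apply, Pi.one_apply,
        neg_one_mul, abs_of_nonpos h_nonpos]

theorem tendsto_nrm_sub_of_tendstoInMeasure (hI : IsOrderContinuousIdeal μ mem nrm)
    {v : ℕ → S → ℝ} {G : S → ℝ} {M : ℝ} (hv : ∀ n, AEMeasurable (v n) μ)
    (hvM : ∀ n, ∀ᵐ s ∂μ, |v n s| ≤ M) (h : TendstoInMeasure μ v atTop G) :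
    mem G ∧ Tendsto (fun n => nrm (v n - G)) atTop (𝓝 0) := by
  obtain ⟨ms, -, hms⟩ := h.exists_seq_tendsto_ae
  have hG : AEMeasurable G μ := aemeasurable_of_tendsto_metrizable_ae' (fun n => hv (ms n)) hms
  have hGM : ∀ᵐ s ∂μ, |G s| ≤ M := by
    filter_upwards [hms, ae_all_iff.2 hvM] with s hs hM
    exact le_of_tendsto' hs.abs fun n => hM _
  refine ⟨hI.mem_of_bounded hG hGM, tendsto_of_subseq_tendsto fun ns hns => ?_⟩
  obtain ⟨ms, -, hms⟩ := (h.comp hns).exists_seq_tendsto_ae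
  refine ⟨ms, hI.tendsto_of_dominated (hI.smul_mem (2 * M) hI.one_mem)
    (fun n => (hv _).sub hG) (fun n => ?_) ?_⟩
  · filter_upwards [hGM, hvM (ns (ms n))] with s hGs hvs
    simp only [Pi.sub_apply, Pi.smul_apply, Pi.one_apply, smul_eq_mul, mul_one]
    linarith [abs_sub (v (ns (ms n)) s) (G s), le_abs_self (2 * M)]
  · filter_upwards [hms] with s hs
    simpa using hs.sub_const (G s)

theorem coeFn_cesaroMean {p : ℝ≥0∞} {a : ℕ → Lp ℝ p μ} {v : ℕ → S → ℝ}
    (h : ∀ n, a n =ᵐ[μ] v n) (n : ℕ) : (cesaroMean a n : Lp ℝ p μ) =ᵐ[μ] cesaroMean v n := by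
  have coeFn_sum : ∀ m, (∑ k ∈ Finset.range m, a k : Lp ℝ p μ) =ᵐ[μ] ∑ k ∈ Finset.range m, v k := by
    intro m
    induction m with
    | zero => simpa using Lp.coeFn_zero ℝ p μ
    | succ m ih =>
      rw [Finset.sum_range_succ, Finset.sum_range_succ]
      exact (Lp.coeFn_add _ _).trans (ih.add (h m))
  exact (Lp.coeFn_smul _ _).trans ((coeFn_sum n).const_smul _)

section SeparableMeasure

variable [IsFiniteMeasure μ] [IsSeparable μ]

theorem exists_subseq_tendsto_cesaroMean_truncation (hI : IsOrderContinuousIdeal μ mem nrm)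
    {f : ℕ → S → ℝ} (hf : ∀ n, AEMeasurable (f n) μ) :
    ∃ τ : ℕ → ℕ, StrictMono τ ∧ ∃ G : ℕ → S → ℝ, ∀ M, mem (G M) ∧ ∀ ρ : ℕ → ℕ, StrictMono ρ →
      Tendsto (fun n => nrm (cesaroMean (fun k => truncation (f (τ (ρ k))) M) n - G M)) atTop
        (𝓝 0) := by
  have : Fact ((2 : ℝ≥0∞) ≠ ⊤) := ⟨by simp⟩
  let a (n M : ℕ) : Lp ℝ 2 μ :=
    (hf n).aestronglyMeasurable.memLp_truncation.toLp (truncation (f n) M)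
  have ha (n M : ℕ) : a n M =ᵐ[μ] truncation (f n) M := MemLp.coeFn_toLp _
  have trunc_le (n M : ℕ) (s : S) : |truncation (f n) M s| ≤ M :=
    (abs_truncation_le_bound _ _ _).trans_eq M.abs_cast
  have norm_a_le (n M : ℕ) : ‖a n M‖ ≤ (measureUnivNNReal μ : ℝ) ^ (2 : ℝ≥0∞).toReal⁻¹ * M :=
    Lp.norm_le_of_ae_bound M.cast_nonneg ((ha n M).mono fun s hs => hs ▸ trunc_le n M s)
  obtain ⟨τ, hτ, G, hG⟩ := exists_subseq_tendsto_cesaroMean norm_a_le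
  have mean_le (M : ℕ) (ρ : ℕ → ℕ) (n : ℕ) (s : S) :
      |cesaroMean (fun k => truncation (f (τ (ρ k))) M) n s| ≤ M := by
    have apply_mean := map_cesaroMean (LinearMap.proj s : (S → ℝ) →ₗ[ℝ] ℝ)
      (fun k => truncation (f (τ (ρ k))) M) n
    simp only [LinearMap.proj_apply] at apply_mean
    rw [apply_mean]
    exact (abs_cesaroMean_le _ n).trans (cesaroMean_le M.cast_nonneg (fun k => trunc_le _ M s) n)
  have hlim (M : ℕ) (ρ : ℕ → ℕ) (hρ : StrictMono ρ) :=
    tendsto_nrm_sub_of_tendstoInMeasure hI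
      (v := cesaroMean fun k => truncation (f (τ (ρ k))) M) (M := M)
      (fun n => (Lp.aestronglyMeasurable _).aemeasurable.congr
        (coeFn_cesaroMean (fun k => ha _ M) n))
      (fun n => .of_forall (mean_le M ρ n))
      ((tendstoInMeasure_of_tendsto_Lp (hG ρ hρ M)).congr
        (fun n => coeFn_cesaroMean (fun k => ha _ M) n) .rfl)
  exact ⟨τ, hτ, fun M => G M, fun M => ⟨(hlim M id strictMono_id).1, fun ρ hρ => (hlim M ρ hρ).2⟩⟩

theorem AlmostBounded.exists_subseq_tendsto_cesaroMean {g : ℕ → S → ℝ}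
    (hgb : AlmostBounded nrm g) (hI : IsOrderContinuousIdeal μ mem nrm) (hg : ∀ n, mem (g n))
    (hw : WeaklyNullSeq mem nrm g) :
    ∃ τ : ℕ → ℕ, StrictMono τ ∧ ∀ ρ : ℕ → ℕ, StrictMono ρ →
      Tendsto (fun n => nrm (cesaroMean (fun k => g (τ (ρ k))) n)) atTop (𝓝 0) := by
  obtain ⟨τ, hτ, G, hG⟩ := exists_subseq_tendsto_cesaroMean_truncation hI fun n =>
    hI.aemeasurable (hg n)
  refine ⟨τ, hτ, fun ρ hρ => ?_⟩
  let u (k : ℕ) : S → ℝ := g (τ (ρ k))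
  have hu (k : ℕ) : mem (u k) := hg _
  have u_weaklyNull : WeaklyNullSeq mem nrm u := fun T hT =>
    (hw T hT).comp (hτ.comp hρ).tendsto_atTop
  have mean_mem := hI.cesaroMean_mem hu
  refine Metric.tendsto_nhds.2 fun ε hε => ?_
  obtain ⟨M, hM⟩ := hgb (ε / 6) (by positivity)
  obtain ⟨mem_G, mean_lim⟩ := hG M
  have nrm_mean_sub_le : ∀ᶠ n in atTop, nrm (cesaroMean u n - G M) ≤ ε / 3 := by
    filter_upwards [(mean_lim ρ hρ).eventually_le_const (by positivity : 0 < ε / 6)] with n hn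
    have mem_sub (k : ℕ) : mem (u k - truncation (u k) M) := hI.sub_truncation_mem (hu k) M
    have mem_trunc := hI.cesaroMean_mem (fun k => hI.truncation_mem (hu k) M) n
    calc nrm (cesaroMean u n - G M)
        = nrm (cesaroMean (fun k => u k - truncation (u k) M) n +
            (cesaroMean (fun k => truncation (u k) M) n - G M)) := by
          rw [cesaroMean_sub, sub_add_sub_cancel]
      _ ≤ ε / 6 + ε / 6 := (hI.nrm_add_le (hI.cesaroMean_mem mem_sub n)
          (hI.sub_mem mem_trunc mem_G)).trans
          (add_le_add (hI.nrm_cesaroMean_le mem_sub (fun k => hM _) n) hn)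
      _ = ε / 3 := by ring
  have nrm_G_le : nrm (G M) ≤ ε / 3 := (u_weaklyNull.cesaroMean hI.toIsNormedIdeal
    hu).nrm_le_of_eventually_nrm_sub_le hI.toIsNormedIdeal mean_mem mem_G nrm_mean_sub_le
  filter_upwards [nrm_mean_sub_le] with n hn
  rw [Real.dist_0_eq_abs, abs_of_nonneg (hI.nrm_nonneg (mean_mem n))]
  have := hI.nrm_add_le (hI.sub_mem (mean_mem n) mem_G) mem_G
  rw [sub_add_cancel] at this
  exact this.trans_lt (by linarith)

end SeparableMeasure

/-! ### The optimal domain as an order continuous ideal -/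

instance : IsFiniteMeasure mu01 := inferInstanceAs (IsFiniteMeasure (volume.restrict _))

instance : IsSeparable mu01 := inferInstanceAs (IsSeparable (volume.restrict _))

section Kernel

variable {B : BFS ℝ mu01 X} {K : ℝ → ℝ → ℝ≥0∞} {f g k : ℝ → ℝ}

theorem aemeasurable_kernel_mul_abs (hK : Measurable (Function.uncurry K))
    (hf : AEMeasurable f mu01) (s : ℝ) :
    AEMeasurable (fun y => K s y * ENNReal.ofReal |f y|) mu01 :=
  hK.of_uncurry_left.aemeasurable.mul hf.abs.ennreal_ofReal

theorem TKabs_eq_lintegral (K : ℝ → ℝ → ℝ≥0∞) (f : ℝ → ℝ) (s : ℝ) :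
    TKabs K f s = ∫⁻ y, K s y * ENNReal.ofReal |f y| ∂mu01 := rfl

theorem measurable_TKabs (hK : Measurable (Function.uncurry K)) (hf : AEMeasurable f mu01) :
    Measurable (TKabs K f) := by
  have TKabs_mk : TKabs K (hf.mk f) = TKabs K f := funext fun s =>
    lintegral_congr_ae (hf.ae_eq_mk.mono fun y hy => by simp only [hy])
  rw [← TKabs_mk]
  exact (hK.mul (hf.measurable_mk.comp measurable_snd).abs.ennreal_ofReal).lintegral_prod_right'

theorem TKabs_mono (h : ∀ᵐ y ∂mu01, |f y| ≤ |g y|) (s : ℝ) : TKabs K f s ≤ TKabs K g s :=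
  lintegral_mono_ae (h.mono fun y hy => by gcongr)

theorem TKabs_eq_add (hK : Measurable (Function.uncurry K)) (hg : AEMeasurable g mu01)
    (h : ∀ y, |g y| + |k y| = |f y|) (s : ℝ) : TKabs K f s = TKabs K g s + TKabs K k s := by
  simp only [TKabs_eq_lintegral]
  rw [← lintegral_add_left' (aemeasurable_kernel_mul_abs hK hg s)]
  refine lintegral_congr fun y => ?_
  rw [← h, ENNReal.ofReal_add (abs_nonneg _) (abs_nonneg _), mul_add]

theorem TKabs_add_le (hK : Measurable (Function.uncurry K)) (hf : AEMeasurable f mu01) (s : ℝ) :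
    TKabs K (f + g) s ≤ TKabs K f s + TKabs K g s := by
  have abs_sum : ∀ y, |f y| + |g y| = |(|f| + |g|) y| := fun y =>
    (abs_of_nonneg (add_nonneg (abs_nonneg _) (abs_nonneg _))).symm
  rw [← TKabs_eq_add hK hf abs_sum s]
  exact TKabs_mono (.of_forall fun y => (abs_add_le _ _).trans_eq (abs_sum y)) s

theorem TKabs_zero (s : ℝ) : TKabs K 0 s = 0 := by
  simp [TKabs]

theorem TKabs_smul (hK : Measurable (Function.uncurry K)) (hf : AEMeasurable f mu01) (c s : ℝ) :
    TKabs K (c • f) s = ENNReal.ofReal |c| * TKabs K f s := by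
  simp only [TKabs_eq_lintegral]
  rw [← lintegral_const_mul'' _ (aemeasurable_kernel_mul_abs hK hf s)]
  refine lintegral_congr fun y => ?_
  rw [Pi.smul_apply, smul_eq_mul, abs_mul, ENNReal.ofReal_mul (abs_nonneg _), mul_left_comm]

theorem TKabs_sum_le (hK : Measurable (Function.uncurry K)) {f : ℕ → ℝ → ℝ}
    (hf : ∀ n, AEMeasurable (f n) mu01) (s : ℝ) (t : Finset ℕ) :
    TKabs K (∑ i ∈ t, f i) s ≤ ∑ i ∈ t, TKabs K (f i) s := by
  classical
  induction t using Finset.induction_on with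
  | empty => simp [TKabs_zero]
  | insert i t hi ih =>
    rw [Finset.sum_insert hi, Finset.sum_insert hi]
    exact (TKabs_add_le hK (hf i) s).trans (by gcongr)

theorem TKabs_cesaroMean_le (hK : Measurable (Function.uncurry K)) {f : ℕ → ℝ → ℝ}
    (hf : ∀ n, AEMeasurable (f n) mu01) (n : ℕ) (s : ℝ) :
    TKabs K (cesaroMean f n) s ≤
      ENNReal.ofReal (n : ℝ)⁻¹ * ∑ i ∈ Finset.range n, TKabs K (f i) s := by
  rw [cesaroMean, TKabs_smul hK (Finset.aemeasurable_sum _ fun i _ => hf i),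
    abs_of_nonneg (by positivity)]
  gcongr
  exact TKabs_sum_le hK hf s _

theorem integrable_kernel_mul (hK : Measurable (Function.uncurry K)) (hf : AEMeasurable f mu01)
    {s : ℝ} (hs : TKabs K f s ≠ ⊤) : Integrable (fun y => (K s y).toReal * f y) mu01 := by
  have := integrable_toReal_of_lintegral_ne_top (aemeasurable_kernel_mul_abs hK hf s) hs
  refine this.mono (hK.of_uncurry_left.ennreal_toReal.aemeasurable.mul hf).aestronglyMeasurable
    (.of_forall fun y => ?_)
  simp

theorem toReal_TKabs (hK : Measurable (Function.uncurry K)) (hf : AEMeasurable f mu01)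
    {s : ℝ} (hs : TKabs K f s ≠ ⊤) :
    (TKabs K f s).toReal = ∫ y, (K s y).toReal * |f y| ∂mu01 := by
  have hm := aemeasurable_kernel_mul_abs hK hf s
  rw [TKabs_eq_lintegral, ← integral_toReal hm (ae_lt_top' hm hs)]
  simp

/-- `x ∈ X` is the function `T_K(|f|)`. -/
def Represents (B : BFS ℝ mu01 X) (K : ℝ → ℝ → ℝ≥0∞) (f : ℝ → ℝ) (x : X) : Prop :=
  ∀ᵐ s ∂mu01, TKabs K f s ≠ ⊤ ∧ (TKabs K f s).toReal = B.J x s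

namespace Represents

variable {x y : X}

theorem ae_eq_ofReal (h : Represents B K f x) :
    ∀ᵐ s ∂mu01, TKabs K f s = ENNReal.ofReal (B.J x s) :=
  h.mono fun _ hs => by rw [← hs.2, ENNReal.ofReal_toReal hs.1]

theorem ae_nonneg (h : Represents B K f x) : ∀ᵐ s ∂mu01, 0 ≤ B.J x s :=
  h.mono fun _ hs => hs.2 ▸ ENNReal.toReal_nonneg

theorem nrmTK_eq (h : Represents B K f x) : nrmTK B K f = ‖x‖ := by
  have unique : ∀ z, Represents B K f z → z = x := fun z hz => B.ext_ae <| by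
    filter_upwards [h, hz] with s hs hzs using hzs.2.symm.trans hs.2
  have : {r : ℝ | ∃ z : X, Represents B K f z ∧ r = ‖z‖} = {‖x‖} :=
    Set.eq_singleton_iff_unique_mem.2
      ⟨⟨x, h, rfl⟩, by rintro _ ⟨z, hz, rfl⟩; rw [unique z hz]⟩
  exact (congrArg sInf this).trans (csInf_singleton _)

theorem ae_le_of_abs_le (hf : Represents B K f x) (hg : Represents B K g y)
    (h : ∀ᵐ t ∂mu01, |f t| ≤ |g t|) : ∀ᵐ s ∂mu01, B.J x s ≤ B.J y s := by
  filter_upwards [hf, hg] with s hfs hgs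
  rw [← hfs.2, ← hgs.2]
  exact ENNReal.toReal_mono hgs.1 (TKabs_mono h s)

theorem ae_abs_le_of_abs_le (hf : Represents B K f x) (hg : Represents B K g y)
    (h : ∀ᵐ t ∂mu01, |f t| ≤ |g t|) : ∀ᵐ s ∂mu01, |B.J x s| ≤ |B.J y s| := by
  filter_upwards [hf.ae_le_of_abs_le hg h, hf.ae_nonneg] with s hs hxs using
    abs_le_abs_of_nonneg hxs hs

theorem congr_abs (hf : Represents B K f x) (h : ∀ᵐ t ∂mu01, |f t| = |g t|) :
    Represents B K g x := by
  filter_upwards [hf] with s hs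
  rwa [le_antisymm (TKabs_mono (h.mono fun _ ht => ht.ge) s)
    (TKabs_mono (h.mono fun _ ht => ht.le) s)]

theorem smul (hK : Measurable (Function.uncurry K)) (hf : AEMeasurable f mu01) (c : ℝ)
    (h : Represents B K f x) : Represents B K (c • f) (|c| • x) := by
  filter_upwards [h] with s hs
  rw [TKabs_smul hK hf, ENNReal.toReal_mul, ENNReal.toReal_ofReal (abs_nonneg _), hs.2, map_smul]
  exact ⟨ENNReal.mul_ne_top ENNReal.ofReal_ne_top hs.1, rfl⟩

theorem sub (hK : Measurable (Function.uncurry K)) (hg : AEMeasurable g mu01)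
    (h : ∀ t, |g t| + |k t| = |f t|) (hx : Represents B K f x) (hy : Represents B K g y) :
    Represents B K k (x - y) := by
  filter_upwards [hx, hy] with s hxs hys
  have hadd := TKabs_eq_add hK hg h s
  have hk : TKabs K k s ≠ ⊤ := ne_top_of_le_ne_top hxs.1 (hadd ▸ le_add_self)
  refine ⟨hk, ?_⟩
  rw [map_sub, Pi.sub_apply, ← hxs.2, ← hys.2, hadd, ENNReal.toReal_add hys.1 hk]
  ring

theorem exists_of_TKabs_le (hK : Measurable (Function.uncurry K)) (hf : AEMeasurable f mu01)
    (h : ∀ᵐ s ∂mu01, TKabs K f s ≤ ENNReal.ofReal (B.J x s)) :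
    ∃ y, Represents B K f y ∧ ‖y‖ ≤ ‖x‖ := by
  obtain ⟨y, hy, hyx⟩ := B.ideal x (fun s => (TKabs K f s).toReal)
    (measurable_TKabs hK hf).ennreal_toReal.aemeasurable <| h.mono fun s hs => by
      rw [abs_of_nonneg ENNReal.toReal_nonneg]
      exact ENNReal.toReal_le_of_le_ofReal (abs_nonneg _)
        (hs.trans (ENNReal.ofReal_le_ofReal (le_abs_self _)))
  refine ⟨y, ?_, hyx⟩
  filter_upwards [h, hy] with s hs hys
  exact ⟨ne_top_of_le_ne_top ENNReal.ofReal_ne_top hs, hys.symm⟩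

end Represents

theorem memTK_of_TKabs_le (hK : Measurable (Function.uncurry K)) (hf : AEMeasurable f mu01) {x : X}
    (h : ∀ᵐ s ∂mu01, TKabs K f s ≤ ENNReal.ofReal (B.J x s)) :
    memTK B K f ∧ nrmTK B K f ≤ ‖x‖ := by
  obtain ⟨y, hy, hyx⟩ := Represents.exists_of_TKabs_le hK hf h
  exact ⟨⟨hf, y, hy⟩, hy.nrmTK_eq.trans_le hyx⟩

theorem memTK_add (hK : Measurable (Function.uncurry K)) (hf : memTK B K f) (hg : memTK B K g) :
    memTK B K (f + g) ∧ nrmTK B K (f + g) ≤ nrmTK B K f + nrmTK B K g := by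
  obtain ⟨hf, x, hx : Represents B K f x⟩ := hf
  obtain ⟨hg, y, hy : Represents B K g y⟩ := hg
  have bound : ∀ᵐ s ∂mu01, TKabs K (f + g) s ≤ ENNReal.ofReal (B.J (x + y) s) := by
    filter_upwards [hx.ae_eq_ofReal, hy.ae_eq_ofReal, hx.ae_nonneg, hy.ae_nonneg]
      with s hxs hys hx0 hy0
    rw [map_add, Pi.add_apply, ENNReal.ofReal_add hx0 hy0, ← hxs, ← hys]
    exact TKabs_add_le hK hf s
  obtain ⟨hmem, hle⟩ := memTK_of_TKabs_le hK (hf.add hg) bound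
  rw [hx.nrmTK_eq, hy.nrmTK_eq]
  exact ⟨hmem, hle.trans (norm_add_le x y)⟩

theorem memTK_solid (hK : Measurable (Function.uncurry K)) (hf : memTK B K f)
    (hg : AEMeasurable g mu01) (h : ∀ᵐ t ∂mu01, |g t| ≤ |f t|) :
    memTK B K g ∧ nrmTK B K g ≤ nrmTK B K f := by
  obtain ⟨-, x, hx : Represents B K f x⟩ := hf
  rw [hx.nrmTK_eq]
  exact memTK_of_TKabs_le hK hg
    (hx.ae_eq_ofReal.mono fun s hs => (TKabs_mono h s).trans_eq hs)

theorem isNormedIdeal_memTK (hK : Measurable (Function.uncurry K)) :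
    IsNormedIdeal mu01 (memTK B K) (nrmTK B K) where
  aemeasurable hf := hf.1
  zero_mem := (memTK_of_TKabs_le hK (f := 0) aemeasurable_const (x := 0)
    (.of_forall fun s => (TKabs_zero s).trans_le zero_le)).1
  add_mem hf hg := (memTK_add hK hf hg).1
  smul_mem c _ hf := hf.2.elim fun _ hx =>
    ⟨hf.1.const_smul c, _, Represents.smul hK hf.1 c hx⟩
  nrm_add_le hf hg := (memTK_add hK hf hg).2
  nrm_smul c f hf := by
    obtain ⟨hf, x, hx : Represents B K f x⟩ := hf
    rw [(hx.smul hK hf c).nrmTK_eq, hx.nrmTK_eq, norm_smul, Real.norm_eq_abs, abs_abs]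
  solid := memTK_solid hK

theorem tendsto_TKabs_toReal_zero (hK : Measurable (Function.uncurry K)) {F : ℝ → ℝ}
    (hF : AEMeasurable F mu01) {f : ℕ → ℝ → ℝ} (hf : ∀ n, AEMeasurable (f n) mu01)
    (hdom : ∀ n, ∀ᵐ y ∂mu01, |f n y| ≤ |F y|)
    (hlim : ∀ᵐ y ∂mu01, Tendsto (fun n => f n y) atTop (𝓝 0)) {s : ℝ} (hs : TKabs K F s ≠ ⊤) :
    Tendsto (fun n => (TKabs K (f n) s).toReal) atTop (𝓝 0) := by
  have hfs : ∀ n, TKabs K (f n) s ≠ ⊤ := fun n => ne_top_of_le_ne_top hs (TKabs_mono (hdom n) s)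
  simp only [toReal_TKabs hK (hf _) (hfs _)]
  rw [← integral_zero ℝ ℝ]
  refine tendsto_integral_of_dominated_convergence (fun y => (K s y).toReal * |F y|)
    (fun n => (hK.of_uncurry_left.ennreal_toReal.aemeasurable.mul (hf n).abs).aestronglyMeasurable)
    ?_ (fun n => ?_) ?_
  · exact integrable_kernel_mul hK hF.abs
      (ne_top_of_le_ne_top hs (TKabs_mono (.of_forall fun y => (abs_abs _).le) s))
  · filter_upwards [hdom n] with y hy
    rw [Real.norm_eq_abs, abs_mul, abs_abs, abs_of_nonneg ENNReal.toReal_nonneg]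
    gcongr
  · filter_upwards [hlim] with y hy
    simpa using hy.abs.const_mul (K s y).toReal

theorem tendsto_nrmTK_zero_of_dominated (hB : B.ACNorm) (hK : Measurable (Function.uncurry K))
    {F : ℝ → ℝ} (hF : memTK B K F) {f : ℕ → ℝ → ℝ} (hf : ∀ n, AEMeasurable (f n) mu01)
    (hdom : ∀ n, ∀ᵐ y ∂mu01, |f n y| ≤ |F y|)
    (hlim : ∀ᵐ y ∂mu01, Tendsto (fun n => f n y) atTop (𝓝 0)) :
    Tendsto (fun n => nrmTK B K (f n)) atTop (𝓝 0) := by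
  choose x hx using fun n => (memTK_solid hK hF (hf n) (hdom n)).1.2
  replace hx : ∀ n, Represents B K (f n) (x n) := hx
  obtain ⟨hF, z, hz : Represents B K F z⟩ := hF
  simp only [(hx _).nrmTK_eq]
  refine tendsto_zero_iff_norm_tendsto_zero.1 (hB.tendsto_zero_of_dominated
    (fun n => (hx n).ae_abs_le_of_abs_le hz (hdom n)) ?_)
  filter_upwards [ae_all_iff.2 hx, hz] with s hxs hzs
  simp only [← (hxs _).2]
  exact tendsto_TKabs_toReal_zero hK hF hf hdom hlim hzs.1

theorem isOrderContinuousIdeal_memTK (hB : B.ACNorm) (hK : Measurable (Function.uncurry K))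
    (hKone : memTK B K ((Set.Icc (0 : ℝ) 1).indicator fun _ => 1)) :
    IsOrderContinuousIdeal mu01 (memTK B K) (nrmTK B K) where
  toIsNormedIdeal := isNormedIdeal_memTK hK
  one_mem := by
    refine (memTK_solid hK hKone aemeasurable_const ?_).1
    filter_upwards [ae_restrict_mem measurableSet_Icc] with y hy
    rw [Set.indicator_of_mem hy]
    rfl
  tendsto_of_dominated hF hf := tendsto_nrmTK_zero_of_dominated hB hK hF hf

end Kernel

/-! ### Subsequence splitting in the optimal domain -/

theorem exists_strictMono_dist_diagonal_le {E : Type*} [PseudoMetricSpace E] {x : ℕ → ℕ → E}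
    {u : ℕ → E} (hx : ∀ M, Tendsto (fun n => x n M) atTop (𝓝 (u M))) (hu : CauchySeq u) :
    ∃ τ : ℕ → ℕ, StrictMono τ ∧
      ∀ ε > 0, ∃ M : ℕ, ∀ k ≥ M, dist (x (τ k) k) (x (τ k) M) ≤ ε := by
  have eventually_near : ∀ k : ℕ, ∀ᶠ n in atTop, ∀ M ∈ Set.Iic k,
      dist (x n M) (u M) < 1 / ((k : ℝ) + 1) := fun k =>
    (eventually_all_finite (Set.finite_Iic k)).2 fun M _ =>
      Metric.tendsto_nhds.1 (hx M) _ (by positivity)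
  obtain ⟨τ, hτ, near⟩ := extraction_forall_of_eventually eventually_near
  refine ⟨τ, hτ, fun ε hε => ?_⟩
  obtain ⟨N₁, hN₁⟩ := Metric.cauchySeq_iff.1 hu (ε / 3) (by positivity)
  obtain ⟨N₂, hN₂⟩ := exists_nat_one_div_lt (show 0 < ε / 3 by positivity)
  refine ⟨max N₁ N₂, fun k hk => ?_⟩
  have hk₂ : 1 / ((k : ℝ) + 1) ≤ ε / 3 :=
    (Nat.one_div_le_one_div ((le_max_right _ _).trans hk)).trans hN₂.le
  calc dist (x (τ k) k) (x (τ k) (max N₁ N₂))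
      ≤ dist (x (τ k) k) (u k) + dist (u k) (u (max N₁ N₂))
          + dist (u (max N₁ N₂)) (x (τ k) (max N₁ N₂)) := dist_triangle4 _ _ _ _
    _ ≤ ε / 3 + ε / 3 + ε / 3 := by
        rw [dist_comm (u _) (x _ _)]
        gcongr
        · exact (near k k Set.self_mem_Iic).le.trans hk₂
        · exact (hN₁ k ((le_max_left _ _).trans hk) _ (le_max_left _ _)).le
        · exact (near k _ hk).le.trans hk₂
    _ = ε := by ring

theorem exists_subseq_tendsto_integral_mul [IsFiniteMeasure μ] [IsSeparable μ]
    {b : ℕ → ℕ → S → ℝ} {C : ℕ → ℝ} (hb : ∀ n M, AEMeasurable (b n M) μ)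
    (hC : ∀ n M s, |b n M s| ≤ C M) :
    ∃ σ : ℕ → ℕ, StrictMono σ ∧ ∀ M, ∀ k : S → ℝ, Integrable k μ →
      ∃ l, Tendsto (fun n => ∫ s, k s * b (σ n) M s ∂μ) atTop (𝓝 l) := by
  have memLp_b : ∀ n M, MemLp (b n M) ⊤ μ := fun n M =>
    memLp_top_of_bound (hb n M).aestronglyMeasurable (C M) (.of_forall (hC n M))
  let pairing := (ContinuousLinearMap.mul ℝ ℝ).lpPairing μ ⊤ 1
  let φ : ℕ → ℕ → (Lp ℝ 1 μ →L[ℝ] ℝ) := fun n M => pairing ((memLp_b n M).toLp _)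
  have norm_φ_le : ∀ n M, ‖φ n M‖ ≤
      ‖pairing‖ * ((measureUnivNNReal μ : ℝ) ^ (⊤ : ℝ≥0∞).toReal⁻¹ * |C M|) := fun n M => by
    refine (pairing.le_opNorm _).trans (mul_le_mul_of_nonneg_left ?_ (norm_nonneg _))
    refine Lp.norm_le_of_ae_bound (abs_nonneg _) ?_
    filter_upwards [(memLp_b n M).coeFn_toLp] with s hs
    rw [hs]
    exact (hC n M s).trans (le_abs_self _)
  have : Fact ((1 : ℝ≥0∞) ≠ ⊤) := ⟨ENNReal.one_ne_top⟩
  obtain ⟨σ, hσ, ψ, hψ⟩ := exists_subseq_tendsto_weakDual norm_φ_le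
  refine ⟨σ, hσ, fun M k hk => ⟨_, (hψ M hk.toL1).congr fun n => ?_⟩⟩
  rw [ContinuousLinearMap.lpPairing_eq_integral]
  refine integral_congr_ae ?_
  filter_upwards [(memLp_b (σ n) M).coeFn_toLp, hk.coeFn_toL1] with s hbs hks
  rw [hbs, hks, ContinuousLinearMap.mul_apply', mul_comm]

section Kernel

variable {B : BFS ℝ mu01 X} {K : ℝ → ℝ → ℝ≥0∞}

-- Weak* compactness of the balls of `L^∞` makes `T_K` compact on uniformly bounded sequences: the
-- pointwise limits exist for a.e. `s`, since `K s` is integrable.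
theorem exists_subseq_tendsto_of_bounded (hB : B.ACNorm) (hK : Measurable (Function.uncurry K))
    (hone : memTK B K 1) {f : ℕ → ℕ → ℝ → ℝ} (hf : ∀ n M, AEMeasurable (f n M) mu01)
    (hbound : ∀ n (M : ℕ) y, |f n M y| ≤ M) {x : ℕ → ℕ → X}
    (hx : ∀ n M, Represents B K (f n M) (x n M)) :
    ∃ σ : ℕ → ℕ, StrictMono σ ∧ ∃ u : ℕ → X, ∀ M,
      Tendsto (fun n => x (σ n) M) atTop (𝓝 (u M)) ∧
      ∀ᵐ s ∂mu01, Tendsto (fun n => B.J (x (σ n) M) s) atTop (𝓝 (B.J (u M) s)) := by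
  obtain ⟨-, z, hz : Represents B K 1 z⟩ := hone
  obtain ⟨σ, hσ, hlim⟩ := exists_subseq_tendsto_integral_mul (fun n M => (hf n M).abs)
    fun n M y => (abs_abs _).trans_le (hbound n M y)
  refine ⟨σ, hσ, ?_⟩
  rw [← Classical.skolem (p := fun M v => Tendsto (fun n => x (σ n) M) atTop (𝓝 v) ∧
    ∀ᵐ s ∂mu01, Tendsto (fun n => B.J (x (σ n) M) s) atTop (𝓝 (B.J v s)))]
  intro M
  have pointwise : ∀ᵐ s ∂mu01, ∃ l, Tendsto (fun n => B.J (x (σ n) M) s) atTop (𝓝 l) := by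
    filter_upwards [ae_all_iff.2 fun n => hx (σ n) M, hz] with s hxs hzs
    have integrable_kernel : Integrable (fun y => (K s y).toReal) mu01 := by
      simpa using integrable_kernel_mul hK measurable_one.aemeasurable hzs.1
    obtain ⟨l, hl⟩ := hlim M _ integrable_kernel
    exact ⟨l, hl.congr fun n => by rw [← (hxs n).2, toReal_TKabs hK (hf _ _) (hxs n).1]⟩
  have dominated : ∀ n, ∀ᵐ s ∂mu01, |B.J (x (σ n) M) s| ≤ |B.J (|(M : ℝ)| • z) s| := fun n =>
    (hx (σ n) M).ae_abs_le_of_abs_le (hz.smul hK measurable_one.aemeasurable M)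
      (.of_forall fun y => by simpa using hbound (σ n) M y)
  obtain ⟨u, hu, hxu⟩ := hB.exists_tendsto_of_dominated dominated
    (u := fun s => limUnder atTop fun n => B.J (x (σ n) M) s)
    (pointwise.mono fun s hs => tendsto_nhds_limUnder hs)
  refine ⟨u, hxu, ?_⟩
  filter_upwards [pointwise, hu] with s hs hus
  rw [hus]
  exact tendsto_nhds_limUnder hs

theorem BFS.SSP.exists_subseq_tendsto_truncation (hX : B.SSP) (hK : Measurable (Function.uncurry K))
    (hone : memTK B K 1) {f : ℕ → ℝ → ℝ} (hf : ∀ n, memTK B K (f n)) {C : ℝ}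
    (hC : ∀ n, nrmTK B K (f n) ≤ C) {x : ℕ → ℕ → X}
    (hx : ∀ n M : ℕ, Represents B K (truncation (f n) M) (x n M)) :
    ∃ σ : ℕ → ℕ, StrictMono σ ∧ ∃ u : ℕ → X, CauchySeq u ∧
      ∀ M, Tendsto (fun n => x (σ n) M) atTop (𝓝 (u M)) := by
  obtain ⟨σ, hσ, u, hu⟩ := exists_subseq_tendsto_of_bounded hX.acNorm hK hone
    (fun n M => aemeasurable_truncation (hf n).1 M)
    (fun n M y => (abs_truncation_le_bound _ _ _).trans_eq (Nat.abs_cast M)) hx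
  refine ⟨σ, hσ, u, ?_, fun M => (hu M).1⟩
  have hlim := ae_all_iff.2 fun M => (hu M).2
  have norm_le : ∀ n M, ‖x n M‖ ≤ C := fun n M => (hx n M).nrmTK_eq.symm.trans_le <|
    ((memTK_solid hK (hf n) (aemeasurable_truncation (hf n).1 M)
      (.of_forall fun y => abs_truncation_le_abs_self _ _ _)).2.trans (hC n))
  have x_mono : ∀ M, ∀ᵐ s ∂mu01, ∀ n, B.J (x (σ n) M) s ≤ B.J (x (σ n) (M + 1)) s := fun M =>
    ae_all_iff.2 fun n => (hx _ _).ae_le_of_abs_le (hx _ _) <| .of_forall fun y => by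
      rw [← abs_truncation_add_abs_sub (f (σ n)) (Nat.cast_le.2 M.le_succ) y]
      exact le_add_of_nonneg_right (abs_nonneg _)
  refine hX.cauchySeq_of_monotone (fun M => le_of_tendsto' (hu M).1.norm fun n => norm_le _ _) ?_ ?_
  · filter_upwards [hlim, ae_all_iff.2 fun M => ae_all_iff.2 fun n => (hx (σ n) M).ae_nonneg]
      with s hs hpos M
    exact ge_of_tendsto' (hs M) (hpos M)
  · filter_upwards [hlim, ae_all_iff.2 x_mono] with s hs hmono
    exact monotone_nat_of_le_succ fun M => le_of_tendsto_of_tendsto' (hs M) (hs (M + 1)) (hmono M)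

theorem BFS.SSP.exists_subseq_nrmTK_truncation_sub_le (hX : B.SSP)
    (hK : Measurable (Function.uncurry K)) (hone : memTK B K 1) {f : ℕ → ℝ → ℝ}
    (hf : ∀ n, memTK B K (f n)) {C : ℝ} (hC : ∀ n, nrmTK B K (f n) ≤ C) :
    ∃ σ : ℕ → ℕ, StrictMono σ ∧ ∀ ε > 0, ∃ M : ℕ, ∀ k ≥ M,
      nrmTK B K (truncation (f (σ k)) k - truncation (f (σ k)) M) ≤ ε := by
  have truncation_mem : ∀ n (M : ℕ), memTK B K (truncation (f n) M) := fun n M =>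
    (isNormedIdeal_memTK hK).truncation_mem (hf n) M
  choose x hx using fun n M => (truncation_mem n M).2
  replace hx : ∀ n M : ℕ, Represents B K (truncation (f n) M) (x n M) := hx
  obtain ⟨σ, hσ, u, hu, hxu⟩ := hX.exists_subseq_tendsto_truncation hK hone hf hC hx
  obtain ⟨τ, hτ, hdiag⟩ := exists_strictMono_dist_diagonal_le hxu hu
  refine ⟨σ ∘ τ, hσ.comp hτ, fun ε hε => ?_⟩
  obtain ⟨M, hM⟩ := hdiag ε hε
  refine ⟨M, fun k hk => ?_⟩
  have hsub : Represents B K (truncation (f (σ (τ k))) k - truncation (f (σ (τ k))) M)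
      (x (σ (τ k)) k - x (σ (τ k)) M) :=
    (hx _ k).sub hK (truncation_mem _ M).1
      (fun y => abs_truncation_add_abs_sub _ (Nat.cast_le.2 hk) y) (hx _ M)
  exact hsub.nrmTK_eq.trans_le ((dist_eq_norm _ _).symm.trans_le (hM k hk))

theorem BFS.SSP.exists_isSplitting_memTK (hX : B.SSP) (hK : Measurable (Function.uncurry K))
    (hI : IsOrderContinuousIdeal mu01 (memTK B K) (nrmTK B K)) {f : ℕ → ℝ → ℝ}
    (hf : ∀ n, memTK B K (f n)) {C : ℝ} (hC : ∀ n, nrmTK B K (f n) ≤ C) :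
    ∃ τ : ℕ → ℕ, StrictMono τ ∧ ∃ g h,
      IsSplitting mu01 (memTK B K) (nrmTK B K) (fun n => f (τ n)) g h := by
  obtain ⟨σ, hσ, htr⟩ := hX.exists_subseq_nrmTK_truncation_sub_le hK hI.one_mem hf hC
  obtain ⟨τ, hτ, g, h, hs⟩ := exists_isSplitting hI (fun n => hf (σ n)) (fun n => hC (σ n)) htr
  exact ⟨σ ∘ τ, hσ.comp hτ, g, h, hs⟩

theorem BFS.SSP.hasSSP_memTK (hX : B.SSP) (hK : Measurable (Function.uncurry K))
    (hI : IsOrderContinuousIdeal mu01 (memTK B K) (nrmTK B K)) :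
    HasSSP mu01 (memTK B K) (nrmTK B K) := by
  rintro f hf ⟨C, hC⟩
  obtain ⟨τ, hτ, g, h, hs⟩ := hX.exists_isSplitting_memTK hK hI hf hC
  exact ⟨τ, hτ, g, h, hs.mem_left, hs.mem_right, hs.eq_add, hs.disjoint,
    hs.almostBounded.unifACNorm hI hs.mem_left, hs.pairwise_disjoint⟩

/-! ### The weak Banach-Saks property of the optimal domain -/

/-- The function `T_K f` for a signed `f`, as a Bochner integral: it is `0` where the integral does
not converge. -/
def kernelIntegral (K : ℝ → ℝ → ℝ≥0∞) (f : ℝ → ℝ) (s : ℝ) : ℝ :=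
  ∫ y, (K s y).toReal * f y ∂mu01

theorem measurable_kernelIntegral (hK : Measurable (Function.uncurry K)) {f : ℝ → ℝ}
    (hf : AEMeasurable f mu01) : Measurable (kernelIntegral K f) := by
  have kernelIntegral_mk : kernelIntegral K (hf.mk f) = kernelIntegral K f := funext fun s =>
    integral_congr_ae (hf.ae_eq_mk.mono fun y hy => by simp only [hy])
  rw [← kernelIntegral_mk]
  exact (hK.ennreal_toReal.mul
    (hf.measurable_mk.comp measurable_snd)).stronglyMeasurable.integral_prod_right'.measurable

theorem abs_kernelIntegral_le (hK : Measurable (Function.uncurry K)) {f : ℝ → ℝ}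
    (hf : AEMeasurable f mu01) {s : ℝ} (hs : TKabs K f s ≠ ⊤) :
    |kernelIntegral K f s| ≤ (TKabs K f s).toReal := by
  rw [toReal_TKabs hK hf hs]
  refine abs_integral_le_integral_abs.trans_eq (integral_congr_ae (.of_forall fun y => ?_))
  simp only [abs_mul, abs_of_nonneg ENNReal.toReal_nonneg]

theorem exists_ae_eq_kernelIntegral (hK : Measurable (Function.uncurry K)) {f : ℝ → ℝ}
    (hf : memTK B K f) :
    ∃ v : X, B.J v =ᵐ[mu01] kernelIntegral K f ∧ ‖v‖ ≤ nrmTK B K f := by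
  obtain ⟨hf, x, hx : Represents B K f x⟩ := hf
  rw [hx.nrmTK_eq]
  refine B.ideal x _ (measurable_kernelIntegral hK hf).aemeasurable (hx.mono fun s hs => ?_)
  exact (abs_kernelIntegral_le hK hf hs.1).trans (hs.2.trans_le (le_abs_self _))

theorem kernelIntegral_add_ae (hK : Measurable (Function.uncurry K)) {f g : ℝ → ℝ}
    (hf : memTK B K f) (hg : memTK B K g) :
    kernelIntegral K (f + g) =ᵐ[mu01] kernelIntegral K f + kernelIntegral K g := by
  filter_upwards [hf.2.choose_spec, hg.2.choose_spec] with s hfs hgs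
  simp only [kernelIntegral, Pi.add_apply, mul_add]
  exact integral_add (integrable_kernel_mul hK hf.1 hfs.1) (integrable_kernel_mul hK hg.1 hgs.1)

theorem kernelIntegral_smul (c : ℝ) (f : ℝ → ℝ) :
    kernelIntegral K (c • f) = c • kernelIntegral K f := by
  funext s
  simp only [kernelIntegral, Pi.smul_apply, smul_eq_mul, mul_left_comm _ c, integral_const_mul]

theorem Represents.ae_eq_kernelIntegral (hK : Measurable (Function.uncurry K)) {f : ℝ → ℝ} {x : X}
    (hx : Represents B K f x) (hf : AEMeasurable f mu01) (hpos : ∀ᵐ y ∂mu01, 0 ≤ f y) :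
    B.J x =ᵐ[mu01] kernelIntegral K f := by
  filter_upwards [hx] with s hs
  rw [← hs.2, toReal_TKabs hK hf hs.1]
  exact integral_congr_ae (hpos.mono fun y hy => by simp only [abs_of_nonneg hy])

-- `T_K` maps the optimal domain into `X`, so functionals on `X` can be pulled back along it.
theorem exists_isBddLinFunctional_eq (hK : Measurable (Function.uncurry K)) (φ : X →L[ℝ] ℝ) :
    ∃ T, IsBddLinFunctional (memTK B K) (nrmTK B K) T ∧
      ∀ f x, AEMeasurable f mu01 → (∀ᵐ y ∂mu01, 0 ≤ f y) → Represents B K f x → T f = φ x := by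
  have hI := isNormedIdeal_memTK (B := B) hK
  choose! V hV hV_le using fun f (hf : memTK B K f) => exists_ae_eq_kernelIntegral hK hf
  refine ⟨fun f => φ (V f), ⟨fun f g hf hg => ?_, fun c f hf => ?_, ‖φ‖, fun f hf => ?_⟩,
    fun f x hf hpos hx => congrArg φ (B.ext_ae ?_)⟩
  · rw [← map_add]
    refine congrArg φ (B.ext_ae ?_)
    rw [map_add]
    exact (hV _ (hI.add_mem hf hg)).trans
      ((kernelIntegral_add_ae hK hf hg).trans ((hV f hf).add (hV g hg)).symm)
  · rw [← smul_eq_mul, ← map_smul]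
    refine congrArg φ (B.ext_ae ?_)
    rw [map_smul]
    exact (hV _ (hI.smul_mem c hf)).trans
      (kernelIntegral_smul c f ▸ ((hV f hf).const_smul c).symm)
  · exact (φ.le_opNorm _).trans (mul_le_mul_of_nonneg_left (hV_le f hf) (norm_nonneg _))
  · exact (hV f ⟨hf, x, hx⟩).trans (hx.ae_eq_kernelIntegral hK hf hpos).symm

theorem tendsto_zero_of_weaklyNullSeq_of_disjoint (hK : Measurable (Function.uncurry K))
    {h : ℕ → ℝ → ℝ} (hmem : ∀ n, memTK B K (h n))
    (hw : WeaklyNullSeq (memTK B K) (nrmTK B K) h)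
    (hd : ∀ i j, i ≠ j → (fun s => h i s * h j s) =ᵐ[mu01] 0) {x : ℕ → X}
    (hx : ∀ n, Represents B K (h n) (x n)) (φ : X →L[ℝ] ℝ) :
    Tendsto (fun n => φ (x n)) atTop (𝓝 0) := by
  have hI := isNormedIdeal_memTK (B := B) hK
  obtain ⟨T, hT, hTφ⟩ := exists_isBddLinFunctional_eq (B := B) hK φ
  obtain ⟨w, hw_meas, hw_le, hwh⟩ := exists_mul_eq_abs_of_pairwise_disjoint
    (fun n => (hmem n).1) hd
  refine (hw _ (hT.comp_mul hI hw_meas.aemeasurable hw_le)).congr fun n => ?_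
  have nonneg : ∀ᵐ y ∂mu01, 0 ≤ (w * h n) y := (hwh n).mono fun y hy => hy ▸ abs_nonneg _
  refine hTφ _ _ (hw_meas.aemeasurable.mul (hmem n).1) nonneg ((hx n).congr_abs ?_)
  filter_upwards [hwh n] with y hy
  rw [hy, abs_abs]

theorem nrmTK_cesaroMean_le (hK : Measurable (Function.uncurry K)) {f : ℕ → ℝ → ℝ}
    (hf : ∀ n, AEMeasurable (f n) mu01) {x : ℕ → X} (hx : ∀ n, Represents B K (f n) (x n))
    (n : ℕ) : nrmTK B K (cesaroMean f n) ≤ ‖cesaroMean x n‖ := by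
  have aemeasurable_mean : AEMeasurable (cesaroMean f n) mu01 :=
    (Finset.aemeasurable_sum _ fun i _ => hf i).const_smul _
  refine (memTK_of_TKabs_le hK aemeasurable_mean ?_).2
  filter_upwards [ae_all_iff.2 fun i => (hx i).ae_eq_ofReal,
    ae_all_iff.2 fun i => (hx i).ae_nonneg] with s hxs hpos
  refine (TKabs_cesaroMean_le hK hf n s).trans_eq ?_
  rw [map_cesaroMean, cesaroMean, Pi.smul_apply, Finset.sum_apply, smul_eq_mul,
    ENNReal.ofReal_mul (by positivity), ENNReal.ofReal_sum_of_nonneg fun i _ => hpos i]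
  simp only [hxs]

theorem exists_subseq_tendsto_nrmTK_cesaroMean (hWBS : WeakBanachSaks X)
    (hK : Measurable (Function.uncurry K)) {h : ℕ → ℝ → ℝ} (hmem : ∀ n, memTK B K (h n))
    (hw : WeaklyNullSeq (memTK B K) (nrmTK B K) h)
    (hd : ∀ i j, i ≠ j → (fun s => h i s * h j s) =ᵐ[mu01] 0) :
    ∃ ρ : ℕ → ℕ, StrictMono ρ ∧
      Tendsto (fun n => nrmTK B K (cesaroMean (fun k => h (ρ k)) n)) atTop (𝓝 0) := by
  have hI := isNormedIdeal_memTK (B := B) hK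
  choose x hx using fun n => (hmem n).2
  obtain ⟨ρ, hρ, hlim⟩ := hWBS x (tendsto_zero_of_weaklyNullSeq_of_disjoint hK hmem hw hd hx)
  exact ⟨ρ, hρ, squeeze_zero (fun n => hI.nrm_nonneg (hI.cesaroMean_mem (fun k => hmem (ρ k)) n))
    (nrmTK_cesaroMean_le hK (fun k => (hmem (ρ k)).1) fun k => hx (ρ k)) hlim⟩

theorem BFS.SSP.hasWBS_memTK (hX : B.SSP) (hWBS : WeakBanachSaks X)
    (hK : Measurable (Function.uncurry K))
    (hI : IsOrderContinuousIdeal mu01 (memTK B K) (nrmTK B K)) :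
    HasWBS (memTK B K) (nrmTK B K) := by
  intro f hf hw
  have hI' := hI.toIsNormedIdeal
  obtain ⟨C, hC⟩ := hI'.exists_nrm_le_of_weaklyNull hf hw
  obtain ⟨σ, hσ, g, h, hs⟩ := hX.exists_isSplitting_memTK hK hI hf hC
  have hwσ : WeaklyNullSeq (memTK B K) (nrmTK B K) fun n => f (σ n) := fun T hT =>
    (hw T hT).comp hσ.tendsto_atTop
  obtain ⟨τ, hτ, hg⟩ := hs.almostBounded.exists_subseq_tendsto_cesaroMean hI hs.mem_left
    (hs.weaklyNullSeq_left hI hwσ)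
  obtain ⟨ρ, hρ, hh⟩ := exists_subseq_tendsto_nrmTK_cesaroMean hWBS hK
    (fun n => hs.mem_right (τ n))
    (fun T hT => (hs.weaklyNullSeq_right hI hwσ T hT).comp hτ.tendsto_atTop)
    (fun i j hij => hs.pairwise_disjoint _ _ (hτ.injective.ne hij))
  refine ⟨fun n => σ (τ (ρ n)), hσ.comp (hτ.comp hρ), ?_⟩
  have hgρ := fun n => hI'.cesaroMean_mem (fun k => hs.mem_left (τ (ρ k))) n
  have hhρ := fun n => hI'.cesaroMean_mem (fun k => hs.mem_right (τ (ρ k))) n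
  have mean_eq : ∀ n, cesaroMean (fun k => f (σ (τ (ρ k)))) n =
      cesaroMean (fun k => g (τ (ρ k))) n + cesaroMean (fun k => h (τ (ρ k))) n := fun n => by
    rw [← cesaroMean_add]
    exact congrArg (cesaroMean · n) (funext fun k => hs.eq_add (τ (ρ k)))
  refine squeeze_zero (fun n => hI'.nrm_nonneg (hI'.cesaroMean_mem (fun k => hf _) n))
    (fun n => ?_) (by simpa using (hg ρ hρ).add hh)
  exact (congrArg (nrmTK B K) (mean_eq n)).trans_le (hI'.nrm_add_le (hgρ n) (hhρ n))

end Kernel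

theorem statement5_general
    {X : Type*} [NormedAddCommGroup X] [NormedSpace ℝ X]
    (B : BFS ℝ mu01 X) (hWBS : WeakBanachSaks X) (hX : B.SSP)
    (K : ℝ → ℝ → ℝ≥0∞) (hK : Measurable (Function.uncurry K))
    (hKone : memTK B K ((Set.Icc (0 : ℝ) 1).indicator fun _ => 1)) :
    HasSSP mu01 (memTK B K) (nrmTK B K) ∧ HasWBS (memTK B K) (nrmTK B K) := by
  have hI := isOrderContinuousIdeal_memTK hX.acNorm hK hKone
  exact ⟨hX.hasSSP_memTK hK hI, hX.hasWBS_memTK hWBS hK hI⟩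

/-- if `X` is a rearrangement invariant space on `[0,1]` with the weak
Banach-Saks property such that `X` and `X*` have the subsequence splitting property, and
`K ≥ 0` is a measurable kernel with `T_K(χ_{[0,1]}) ∈ X`, then the optimal domain `[T_K,X]`
has both the subsequence splitting property and the weak Banach-Saks property. -/
theorem statement5
    {X : Type*} [NormedAddCommGroup X] [NormedSpace ℝ X] [CompleteSpace X]
    (B : BFS ℝ mu01 X) (hRI : B.RI)
    (hWBS : WeakBanachSaks X) (hX : B.SSP)
    (B' : BFS ℝ mu01 (X →L[ℝ] ℝ))
    (hB'rep : ∀ (φ : X →L[ℝ] ℝ) (x : X), φ x = ∫ s, B.J x s * B'.J φ s ∂mu01)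
    (hXdual : B'.SSP)
    (K : ℝ → ℝ → ℝ≥0∞) (hK : Measurable (Function.uncurry K))
    (hKone : memTK B K ((Set.Icc (0 : ℝ) 1).indicator fun _ => 1)) :
    HasSSP mu01 (memTK B K) (nrmTK B K) ∧ HasWBS (memTK B K) (nrmTK B K) :=
  statement5_general B hWBS hX K hK hKone

end Paper
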